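/- For every real k ≠ 0, u*_τ(k) = a₀(k) + a₁(k)·τ^{1/4} + a₂(k)·τ^{1/2} + a₃(k)·τ^{3/4} + O(τ) as τ → 0+. -/

import Mathlib

/-!
Let `s = √τ`. Through Stumpff functions, `A(u/s, τ)` and `B(u/s, τ)` depend on the discriminant
`d(u/s)` only via its square, so they extend smoothly to `s = 0`, where
`B = u²/2 + s B̂₁(u) + O(s²)` and `∂ᵤA = O(s)`. The argument of the logarithm in `Λ_τ` is therefore
`φ = 1 - β_t u² - 2 β_t s B̂₁(u) + O(s²)`. Where `φ < 0` the principal logarithm makes `Λ_τ`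
non-real, so `D_{t,τ}` stays bounded and `φ > 0` at the saddle point.

Put `r = τ^{1/4}`. Multiplying `Λ_τ'(u) = k` by `φ²` gives `k (φ/r)² = E u + O(φ) + O(r²)` with
`E = v e^{-κt}`; hence `φ → 0`, `u → a₀` and `φ/r → e₀ > 0`. In the unknowns
`z = (u - a₀)/r` and `y = φ/r`, the definition of `φ` and the saddle-point equation form a smooth
system in `(r, z, y)` up to an error `O(r³)`. Its linearisation in `(z, y)` at `r = 0` is injective,
and the truncated expansion solves it up to the same error, so the two solutions are `O(r³)` apart.
-/

open Filter Topology Asymptotics MeasureTheory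


noncomputable section


/-- sign convention of the paper: 1 if `0 ≤ x`, -1 otherwise. -/
def sgn' (x : ℝ) : ℝ := if 0 ≤ x then 1 else -1

/-- principal-branch complex square root `d` of the Heston Riccati discriminant. -/
def hestD (κ ρ ξ : ℝ) (w : ℂ) : ℂ :=
  (((κ : ℂ) - (ρ : ℂ) * (ξ : ℂ) * w) ^ 2 + w * (1 - w) * (ξ : ℂ) ^ 2) ^ ((1 : ℂ) / 2)

def hestGamma (κ ρ ξ : ℝ) (w : ℂ) : ℂ :=
  ((κ : ℂ) - (ρ : ℂ) * (ξ : ℂ) * w - hestD κ ρ ξ w) /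
    ((κ : ℂ) - (ρ : ℂ) * (ξ : ℂ) * w + hestD κ ρ ξ w)

def hestB (κ ρ ξ : ℝ) (w : ℂ) (τ : ℝ) : ℂ :=
  (((κ : ℂ) - (ρ : ℂ) * (ξ : ℂ) * w - hestD κ ρ ξ w) / (ξ : ℂ) ^ 2) *
    ((1 - Complex.exp (-(hestD κ ρ ξ w) * (τ : ℂ))) /
      (1 - hestGamma κ ρ ξ w * Complex.exp (-(hestD κ ρ ξ w) * (τ : ℂ))))

def hestA (κ θ ρ ξ : ℝ) (w : ℂ) (τ : ℝ) : ℂ :=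
  ((κ * θ / ξ ^ 2 : ℝ) : ℂ) *
    (((κ : ℂ) - (ρ : ℂ) * (ξ : ℂ) * w - hestD κ ρ ξ w) * (τ : ℂ) -
      2 * Complex.log ((1 - hestGamma κ ρ ξ w * Complex.exp (-(hestD κ ρ ξ w) * (τ : ℂ))) /
        (1 - hestGamma κ ρ ξ w)))

def betaT (κ ξ t : ℝ) : ℝ := ξ ^ 2 * (1 - Real.exp (-(κ * t))) / (4 * κ)

/-- explicit Heston forward log-mgf `G_τ(w)`. -/
def hestG (κ θ ξ v ρ t : ℝ) (w : ℂ) (τ : ℝ) : ℂ :=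
  hestA κ θ ρ ξ w τ +
    hestB κ ρ ξ w τ * (v : ℂ) * ((Real.exp (-(κ * t)) : ℝ) : ℂ) /
      (1 - 2 * (betaT κ ξ t : ℂ) * hestB κ ρ ξ w τ) -
    ((2 * κ * θ / ξ ^ 2 : ℝ) : ℂ) *
      Complex.log (1 - 2 * (betaT κ ξ t : ℂ) * hestB κ ρ ξ w τ)

/-- rescaled forward log-mgf, for complex argument. -/
def hestLambdaC (κ θ ξ v ρ t τ : ℝ) (z : ℂ) : ℂ :=
  ((Real.sqrt τ : ℝ) : ℂ) * hestG κ θ ξ v ρ t (z / ((Real.sqrt τ : ℝ) : ℂ)) τ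

/-- rescaled forward log-mgf `Λ_τ(u) = √τ · G_τ(u/√τ)`. -/
def hestLambda (κ θ ξ v ρ t τ : ℝ) (u : ℝ) : ℂ :=
  hestLambdaC κ θ ξ v ρ t τ (u : ℂ)

/-- `D_{t,τ}`: the maximal open interval containing `0` on which `Λ_τ` is real-valued. -/
def hestDom (κ θ ξ v ρ t τ : ℝ) : Set ℝ :=
  connectedComponentIn (interior {u : ℝ | (hestLambda κ θ ξ v ρ t τ u).im = 0}) 0



def B1hat (ρ ξ u : ℝ) : ℝ := u / 4 * (u ^ 2 * ρ * ξ - 2)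
/-- the derivative of `B1hat` in `u`. -/
def B1hat' (ρ ξ u : ℝ) : ℝ := (3 * u ^ 2 * ρ * ξ - 2) / 4

def coefA0 (κ θ ξ v ρ t k : ℝ) : ℝ := sgn' k / Real.sqrt (betaT κ ξ t)

def coefA1 (κ θ ξ v ρ t k : ℝ) : ℝ :=
  -(coefA0 κ θ ξ v ρ t k) * Real.sqrt v * Real.exp (-(κ * t) / 2) /
    (2 * Real.sqrt |k| * betaT κ ξ t ^ ((1 : ℝ) / 4))

def coefA2 (κ θ ξ v ρ t k : ℝ) : ℝ :=
  -(κ * θ) / (k * ξ ^ 2) - B1hat ρ ξ (coefA0 κ θ ξ v ρ t k) / coefA0 κ θ ξ v ρ t k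

def coefA3 (κ θ ξ v ρ t k : ℝ) : ℝ :=
  (2 * betaT κ ξ t * coefA1 κ θ ξ v ρ t k ^ 3 / (ξ ^ 4 * v ^ 2)) *
    (ξ ^ 2 * v * betaT κ ξ t * Real.exp (κ * t) *
        (|k| * ξ ^ 2 * Real.sqrt (betaT κ ξ t) * B1hat ρ ξ (coefA0 κ θ ξ v ρ t k) -
          k * ξ ^ 2 * B1hat' ρ ξ (coefA0 κ θ ξ v ρ t k) - κ * θ) +
      (2 * κ * θ * betaT κ ξ t * Real.exp (κ * t)) ^ 2 - ξ ^ 4 * v ^ 2 / 16)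

def coefE0 (κ θ ξ v ρ t k : ℝ) : ℝ := -2 * coefA1 κ θ ξ v ρ t k / coefA0 κ θ ξ v ρ t k

def coefR (κ θ ξ v ρ t k : ℝ) : ℝ :=
  coefA1 κ θ ξ v ρ t k ^ 2 / 2 - κ * θ / (|k| * ξ ^ 2 * Real.sqrt (betaT κ ξ t))

def coefE1 (κ θ ξ v ρ t k : ℝ) : ℝ := -2 * betaT κ ξ t * coefR κ θ ξ v ρ t k

def coefE2 (κ θ ξ v ρ t k : ℝ) : ℝ :=
  -2 * betaT κ ξ t *
    (coefA1 κ θ ξ v ρ t k * coefA2 κ θ ξ v ρ t k + coefA0 κ θ ξ v ρ t k * coefA3 κ θ ξ v ρ t k +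
      coefA1 κ θ ξ v ρ t k * B1hat' ρ ξ (coefA0 κ θ ξ v ρ t k))

def coefZeta (κ θ ξ v ρ t k : ℝ) : ℝ :=
  2 * Real.sqrt v * Real.exp (-(κ * t) / 2) / coefE0 κ θ ξ v ρ t k ^ ((3 : ℝ) / 2)

def coefPsi0 (κ θ ξ v ρ t k : ℝ) : ℝ :=
  (coefA0 κ θ ξ v ρ t k * v * Real.exp (-(κ * t)) / coefE0 κ θ ξ v ρ t k ^ 3) *
    (coefE0 κ θ ξ v ρ t k ^ 2 +
      coefA0 κ θ ξ v ρ t k * betaT κ ξ t *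
        (3 * coefA1 κ θ ξ v ρ t k * coefE0 κ θ ξ v ρ t k -
          2 * coefA0 κ θ ξ v ρ t k * coefE1 κ θ ξ v ρ t k))

def coefPsi1 (κ θ ξ v ρ t k : ℝ) : ℝ :=
  -4 * coefA0 κ θ ξ v ρ t k * v * betaT κ ξ t * Real.exp (-(κ * t)) / coefE0 κ θ ξ v ρ t k ^ 4

def coefPsi2 (κ θ ξ v ρ t k : ℝ) : ℝ :=
  (v * Real.exp (-(κ * t)) / (2 * coefE0 κ θ ξ v ρ t k ^ 4)) *
    (4 * coefA0 κ θ ξ v ρ t k * betaT κ ξ t *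
        (3 * coefA0 κ θ ξ v ρ t k * coefE1 κ θ ξ v ρ t k -
          4 * coefA1 κ θ ξ v ρ t k * coefE0 κ θ ξ v ρ t k) -
      5 * coefE0 κ θ ξ v ρ t k ^ 2)

def coefPsi3 (κ θ ξ v ρ t k : ℝ) : ℝ :=
  8 * v * betaT κ ξ t * Real.exp (-(κ * t)) / coefE0 κ θ ξ v ρ t k ^ 5

def coefPsi4 (κ θ ξ v ρ t k : ℝ) : ℝ :=
  (v * Real.exp (-(κ * t)) / (2 * coefE0 κ θ ξ v ρ t k ^ 3)) *
    ((coefE1 κ θ ξ v ρ t k ^ 2 - coefE0 κ θ ξ v ρ t k * coefE2 κ θ ξ v ρ t k) / betaT κ ξ t -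
      2 * coefA0 κ θ ξ v ρ t k * coefA1 κ θ ξ v ρ t k * coefE0 κ θ ξ v ρ t k *
        coefE1 κ θ ξ v ρ t k +
      2 * coefE0 κ θ ξ v ρ t k ^ 2 * coefR κ θ ξ v ρ t k)

def coefPhi2a (κ θ ξ v ρ t k : ℝ) : ℝ :=
  coefPsi2 κ θ ξ v ρ t k - coefPsi0 κ θ ξ v ρ t k ^ 2 / 2 -
    (4 * κ * θ * betaT κ ξ t / ξ ^ 2) * (2 * κ * θ + ξ ^ 2) / (coefE0 κ θ ξ v ρ t k ^ 2 * ξ ^ 2) -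
    (4 * κ * θ * betaT κ ξ t / ξ ^ 2) *
      (coefA0 κ θ ξ v ρ t k * coefPsi0 κ θ ξ v ρ t k / coefE0 κ θ ξ v ρ t k)

def coefPhi2b (κ θ ξ v ρ t k : ℝ) : ℝ :=
  coefPsi3 κ θ ξ v ρ t k - coefPsi0 κ θ ξ v ρ t k * coefPsi1 κ θ ξ v ρ t k -
    (4 * κ * θ * betaT κ ξ t / ξ ^ 2) *
      (coefA0 κ θ ξ v ρ t k * coefPsi1 κ θ ξ v ρ t k / coefE0 κ θ ξ v ρ t k)

def coefPhi2c (κ θ ξ v ρ t k : ℝ) : ℝ := -(coefPsi1 κ θ ξ v ρ t k ^ 2) / 2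

def coefC0 (κ θ ξ v ρ t k : ℝ) : ℝ := 2 * |coefA1 κ θ ξ v ρ t k * k|

def coefC1 (κ θ ξ v ρ t k : ℝ) : ℝ :=
  (v * Real.exp (-(κ * t)) / coefE0 κ θ ξ v ρ t k) *
      (coefA0 κ θ ξ v ρ t k * coefA1 κ θ ξ v ρ t k -
        coefE1 κ θ ξ v ρ t k / (2 * betaT κ ξ t * coefE0 κ θ ξ v ρ t k)) -
    coefA2 κ θ ξ v ρ t k * k

def coefC2 (κ θ ξ v ρ t k : ℝ) : ℝ := coefE0 κ θ ξ v ρ t k ^ (-(2 * κ * θ / ξ ^ 2))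

def coefZ1 (κ θ ξ v ρ t k : ℝ) : ℝ :=
  coefPsi4 κ θ ξ v ρ t k - coefA3 κ θ ξ v ρ t k * k -
    (2 * κ * θ / ξ ^ 2) * (coefE1 κ θ ξ v ρ t k / coefE0 κ θ ξ v ρ t k)

def coefP1 (κ θ ξ v ρ t k : ℝ) : ℝ :=
  coefE0 κ θ ξ v ρ t k + coefPhi2a κ θ ξ v ρ t k / coefZeta κ θ ξ v ρ t k ^ 2 +
    3 * coefPhi2b κ θ ξ v ρ t k / coefZeta κ θ ξ v ρ t k ^ 4 +
    15 * coefPhi2c κ θ ξ v ρ t k / coefZeta κ θ ξ v ρ t k ^ 6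

def phi1C (κ θ ξ v ρ t k u : ℝ) : ℂ :=
  Complex.I * (u : ℂ) *
      ((coefPsi0 κ θ ξ v ρ t k +
          4 * coefA0 κ θ ξ v ρ t k * κ * θ * betaT κ ξ t / (coefE0 κ θ ξ v ρ t k * ξ ^ 2) : ℝ) : ℂ) +
    Complex.I * (u : ℂ) ^ 3 * ((coefPsi1 κ θ ξ v ρ t k : ℝ) : ℂ)

def phi2R (κ θ ξ v ρ t k u : ℝ) : ℝ :=
  u ^ 2 * coefPhi2a κ θ ξ v ρ t k + u ^ 4 * coefPhi2b κ θ ξ v ρ t k +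
    u ^ 6 * coefPhi2c κ θ ξ v ρ t k

lemma isBigO_sub_of_injective_partial {𝕜 P E F α : Type*}
    [NontriviallyNormedField 𝕜] [CompleteSpace 𝕜] [NormedAddCommGroup P] [NormedSpace 𝕜 P]
    [NormedAddCommGroup E] [NormedSpace 𝕜 E] [FiniteDimensional 𝕜 E]
    [NormedAddCommGroup F] [NormedSpace 𝕜 F] {G : P × E → F} {G' : P × E →L[𝕜] F} {p₀ : P} {x₀ : E}
    (hG : HasStrictFDerivAt G G' (p₀, x₀)) (hG' : ∀ h, G' (0, h) = 0 → h = 0)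
    {l : Filter α} {p : α → P} {x x' : α → E} (hp : Tendsto p l (𝓝 p₀))
    (hx : Tendsto x l (𝓝 x₀)) (hx' : Tendsto x' l (𝓝 x₀)) :
    (fun i => x i - x' i) =O[l] fun i => G (p i, x i) - G (p i, x' i) := by
  let T : E →L[𝕜] F := G'.comp (ContinuousLinearMap.inr 𝕜 P E)
  obtain ⟨K, -, hK⟩ :=
    LinearMap.exists_antilipschitzWith (T : E →ₗ[𝕜] F) (LinearMap.ker_eq_bot'.2 hG')
  have lower_bound : (fun i => x i - x' i) =O[l] fun i => T (x i - x' i) :=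
    .of_bound K <| .of_forall fun i => by simpa using hK.le_mul_dist (x i - x' i) 0
  have linearization :
      (fun i => G (p i, x i) - G (p i, x' i) - T (x i - x' i)) =o[l] fun i => x i - x' i := by
    have := hG.isLittleO.comp_tendsto ((hp.prodMk_nhds hx).prodMk_nhds (hp.prodMk_nhds hx'))
    refine (this.congr (fun i => by simp [T, -map_sub]) fun _ => rfl).trans_isBigO <|
      .of_bound 1 <| .of_forall fun i => by simp [Prod.norm_def]
  have := (linearization.trans_isBigO lower_bound).right_isBigO_add
  exact lower_bound.trans (this.congr_right fun i => by simp)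

lemma isBigO_one_nhdsSet {X F : Type*} [TopologicalSpace X] [NormedAddCommGroup F] {g : X → F}
    {K : Set X} (hK : IsCompact K) (hg : ∀ x ∈ K, ContinuousAt g x) :
    g =O[𝓝ˢ K] fun _ => (1 : ℝ) := by
  obtain ⟨C, hC⟩ := hK.exists_bound_of_continuousOn
    fun x hx => (hg x hx).continuousWithinAt
  refine .of_bound (C + 1) (eventually_nhdsSet_iff_forall.2 fun x hx => ?_)
  have : ‖g x‖ < C + 1 := (hC x hx).trans_lt (lt_add_one C)
  simpa using ((hg x hx).norm.eventually_lt_const this).mono fun _ => le_of_lt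

lemma isBigO_one_comp_of_continuous {α E F : Type*} [NormedAddCommGroup E] [ProperSpace E]
    [NormedAddCommGroup F] {l : Filter α} {f : E → F} {g : α → E} (hf : Continuous f)
    (hg : g =O[l] fun _ => (1 : ℝ)) : (fun i => f (g i)) =O[l] fun _ => (1 : ℝ) := by
  obtain ⟨C, hC⟩ := hg.bound
  obtain ⟨M, hM⟩ := (isCompact_closedBall (0 : E) C).exists_bound_of_continuousOn hf.continuousOn
  exact .of_bound M (hC.mono fun i hi => by simpa using hM (g i) (by simpa using hi))

section PartialDerivative

variable {F : Type*} [NormedAddCommGroup F] [NormedSpace ℝ F] {g : ℝ → ℝ → F}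

lemma hasDerivAt_right_of_differentiableAt {x y : ℝ}
    (hg : DifferentiableAt ℝ (fun p : ℝ × ℝ => g p.1 p.2) (x, y)) :
    HasDerivAt (g x) (fderiv ℝ (fun p : ℝ × ℝ => g p.1 p.2) (x, y) (0, 1)) y :=
  hg.hasFDerivAt.comp_hasDerivAt y ((hasDerivAt_const y x).prodMk (hasDerivAt_id y))

lemma continuousAt_deriv_right {p : ℝ × ℝ}
    (hg : ContDiffAt ℝ 1 (fun p : ℝ × ℝ => g p.1 p.2) p) :
    ContinuousAt (fun q : ℝ × ℝ => deriv (g q.1) q.2) p := by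
  have : (fun q : ℝ × ℝ => deriv (g q.1) q.2) =ᶠ[𝓝 p]
      fun q => fderiv ℝ (fun p : ℝ × ℝ => g p.1 p.2) q (0, 1) :=
    (hg.eventually (by simp)).mono fun q hq =>
      (hasDerivAt_right_of_differentiableAt (hq.differentiableAt one_ne_zero)).deriv
  exact ((hg.continuousAt_fderiv one_ne_zero).clm_apply continuousAt_const).congr this.symm

end PartialDerivative

lemma tendsto_nhds_of_sq {α : Type*} {l : Filter α} {f : α → ℝ} {c : ℝ} (hc : 0 ≤ c)
    (hf : ∀ᶠ i in l, 0 ≤ f i) (h : Tendsto (fun i => f i ^ 2) l (𝓝 (c ^ 2))) :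
    Tendsto f l (𝓝 c) := by
  have := h.sqrt
  rw [Real.sqrt_sq hc] at this
  exact this.congr' (hf.mono fun i hi => Real.sqrt_sq hi)

lemma eventually_eval_ne_zero {R : Type*} [CommRing R] [IsDomain R] [TopologicalSpace R] [T1Space R]
    {P : Polynomial R} (hP : P ≠ 0) (a : R) : ∀ᶠ x in 𝓝[≠] a, P.eval x ≠ 0 :=
  nhdsNE_le_cofinite a (Polynomial.finite_setOfPred_isRoot hP).compl_mem_cofinite

lemma tendsto_prodMk_nhdsSet {α X Y : Type*} [TopologicalSpace X] [TopologicalSpace Y]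
    {l : Filter α} {f : α → X} {g : α → Y} {x : X} {K : Set Y} (hK : IsCompact K)
    (hf : Tendsto f l (𝓝 x)) (hg : ∀ᶠ i in l, g i ∈ K) :
    Tendsto (fun i => (f i, g i)) l (𝓝ˢ ({x} ×ˢ K)) := by
  rw [isCompact_singleton.nhdsSet_prod_eq hK, nhdsSet_singleton]
  exact hf.prodMk ((tendsto_principal.2 hg).mono_right principal_le_nhdsSet)

lemma isBigO_pow_nhdsGT_zero {n j : ℕ} (h : j < n) :
    (fun r : ℝ => r ^ n) =O[𝓝[>] 0] fun r => r ^ j :=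
  (isLittleO_pow_pow h).isBigO.mono nhdsWithin_le_nhds

lemma tendsto_pow_nhdsGT_zero {n : ℕ} (hn : n ≠ 0) :
    Tendsto (fun r : ℝ => r ^ n) (𝓝[>] 0) (𝓝 0) := by
  simpa [hn] using ((continuous_pow n).tendsto (0 : ℝ)).mono_left nhdsWithin_le_nhds

lemma tendsto_pow_nhdsGT_nhdsGT {n : ℕ} (hn : n ≠ 0) :
    Tendsto (fun r : ℝ => r ^ n) (𝓝[>] 0) (𝓝[>] 0) :=
  tendsto_nhdsWithin_iff.2 ⟨tendsto_pow_nhdsGT_zero hn,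
    eventually_nhdsWithin_of_forall fun _ hr => Set.mem_Ioi.2 (pow_pos hr n)⟩

lemma tendsto_rpow_nhdsGT_nhdsGT {p : ℝ} (hp : 0 < p) :
    Tendsto (fun τ : ℝ => τ ^ p) (𝓝[>] 0) (𝓝[>] 0) := by
  refine tendsto_nhdsWithin_iff.2 ⟨?_,
    eventually_nhdsWithin_of_forall fun _ hτ => Real.rpow_pos_of_pos hτ p⟩
  simpa [hp.ne'] using ((Real.continuous_rpow_const hp.le).tendsto 0).mono_left nhdsWithin_le_nhds

/-! ### Stumpff functions -/

/-- The Taylor series of the Stumpff function `stumpff j`. -/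
def stumpffSeries (j : ℕ) : FormalMultilinearSeries ℝ ℝ ℝ :=
  .ofScalars ℝ fun n : ℕ => ((2 * n + j).factorial : ℝ)⁻¹

/-- The `j`-th Stumpff function, with the sign of its argument reversed: `stumpff j x = c_j(-x)`.
It makes `cosh √x` and `sinh √x / √x` smooth in `x`, so that no choice of square root enters. -/
def stumpff (j : ℕ) : ℝ → ℝ := (stumpffSeries j).sum

lemma stumpffSeries_radius (j : ℕ) : (stumpffSeries j).radius = ⊤ := by
  refine FormalMultilinearSeries.ofScalars_radius_eq_top_of_tendsto ℝ _
    (.of_forall fun n => by positivity) <|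
    squeeze_zero (fun n => by positivity) (fun n => ?_) tendsto_one_div_add_atTop_nhds_zero_nat
  have ratio_le : (n + 1 : ℝ) * (2 * n + j).factorial ≤ (2 * (n + 1) + j).factorial := by
    norm_cast
    calc (n + 1) * (2 * n + j).factorial ≤ (2 * n + j + 1) * (2 * n + j).factorial := by gcongr; lia
      _ = (2 * n + j + 1).factorial := (Nat.factorial_succ _).symm
      _ ≤ (2 * (n + 1) + j).factorial := Nat.factorial_le (by lia)
  rw [norm_inv, norm_inv, Real.norm_natCast, Real.norm_natCast, inv_div_inv,
    div_le_div_iff₀ (by positivity) (by positivity), one_mul, mul_comm]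
  exact ratio_le

lemma hasFPowerSeriesOnBall_stumpff (j : ℕ) :
    HasFPowerSeriesOnBall (stumpff j) (stumpffSeries j) 0 ⊤ :=
  stumpffSeries_radius j ▸
    (stumpffSeries j).hasFPowerSeriesOnBall (stumpffSeries_radius j ▸ ENNReal.zero_lt_top)

lemma hasSum_stumpff (j : ℕ) (x : ℝ) :
    HasSum (fun n : ℕ => x ^ n / (2 * n + j).factorial) (stumpff j x) := by
  simpa [stumpffSeries, FormalMultilinearSeries.ofScalars_apply_eq, div_eq_mul_inv, mul_comm] using
    (hasFPowerSeriesOnBall_stumpff j).hasSum (y := x) (by simp)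

@[fun_prop]
lemma contDiff_stumpff (j : ℕ) {n : WithTop ℕ∞} : ContDiff ℝ n (stumpff j) :=
  contDiff_iff_contDiffAt.2 fun x =>
    ((hasFPowerSeriesOnBall_stumpff j).analyticOnNhd x (by simp)).contDiffAt

lemma stumpff_eq_add_mul (j : ℕ) (x : ℝ) :
    stumpff j x = (j.factorial : ℝ)⁻¹ + x * stumpff (j + 2) x := by
  have tail : HasSum (fun n : ℕ => x ^ (n + 1) / (2 * (n + 1) + j).factorial)
      (x * stumpff (j + 2) x) := by
    refine ((hasSum_stumpff (j + 2) x).mul_left x).congr_fun fun n => ?_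
    rw [show 2 * (n + 1) + j = 2 * n + (j + 2) by ring]
    ring
  have := (hasSum_nat_add_iff (f := fun n : ℕ => x ^ n / (2 * n + j).factorial) 1).1 tail
  simpa [add_comm] using (hasSum_stumpff j x).unique this

lemma cosh_eq_stumpff {z : ℂ} {x : ℝ} (h : z ^ 2 = x) : Complex.cosh z = stumpff 0 x := by
  refine (Complex.hasSum_cosh z).unique <|
    (Complex.hasSum_ofReal.2 (hasSum_stumpff 0 x)).congr_fun fun n => ?_
  simp [pow_mul, h]

lemma sinh_eq_mul_stumpff {z : ℂ} {x : ℝ} (h : z ^ 2 = x) :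
    Complex.sinh z = z * stumpff 1 x := by
  refine (Complex.hasSum_sinh z).unique <|
    ((Complex.hasSum_ofReal.2 (hasSum_stumpff 1 x)).mul_left z).congr_fun fun n => ?_
  rw [pow_succ, pow_mul, h]
  push_cast
  ring

/-! ### The coefficient `B1hat` -/

lemma hasDerivAt_B1hat (ρ ξ u : ℝ) : HasDerivAt (B1hat ρ ξ) (B1hat' ρ ξ u) u := by
  have := ((hasDerivAt_id u).div_const 4).mul
    (((((hasDerivAt_pow 2 u).mul_const ρ).mul_const ξ)).sub_const 2)
  refine this.congr_deriv ?_
  rw [B1hat']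
  simp only [id_eq, Nat.cast_ofNat, Nat.add_one_sub_one, pow_one]
  ring

lemma B1hat_add (ρ ξ a h : ℝ) : B1hat ρ ξ (a + h) =
    B1hat ρ ξ a + B1hat' ρ ξ a * h + ρ * ξ / 4 * h ^ 2 * (3 * a + h) := by
  simp only [B1hat, B1hat']
  ring

lemma B1hat'_add (ρ ξ a h : ℝ) :
    B1hat' ρ ξ (a + h) = B1hat' ρ ξ a + 3 * (ρ * ξ) / 4 * h * (2 * a + h) := by
  simp only [B1hat']
  ring

lemma contDiff_B1hat {ρ ξ : ℝ} {n : WithTop ℕ∞} : ContDiff ℝ n (B1hat ρ ξ) := by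
  unfold B1hat
  fun_prop

lemma contDiff_B1hat' {ρ ξ : ℝ} {n : WithTop ℕ∞} : ContDiff ℝ n (B1hat' ρ ξ) := by
  unfold B1hat'
  fun_prop

/-! ### Riccati solution in real form -/

lemma one_sub_exp_neg_two_mul (z : ℂ) :
    1 - Complex.exp (-(2 * z)) = 2 * Complex.exp (-z) * Complex.sinh z := by
  have : Complex.exp (-z) * Complex.exp z = 1 := by rw [← Complex.exp_add]; simp
  rw [show -(2 * z) = -z + -z by ring, Complex.exp_add, Complex.sinh]
  linear_combination -this

lemma one_sub_div_mul_exp_neg_two_mul {c d : ℂ} (hcd : c + d ≠ 0) (z : ℂ) :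
    1 - (c - d) / (c + d) * Complex.exp (-(2 * z)) =
      2 * Complex.exp (-z) * (c * Complex.sinh z + d * Complex.cosh z) / (c + d) := by
  have : Complex.exp (-z) * Complex.exp z = 1 := by rw [← Complex.exp_add]; simp
  rw [show -(2 * z) = -z + -z by ring, Complex.exp_add, Complex.sinh, Complex.cosh]
  field_simp
  linear_combination -(c + d) * this

lemma hestD_sq (κ ρ ξ : ℝ) (w : ℂ) :
    hestD κ ρ ξ w ^ 2 = (κ - ρ * ξ * w) ^ 2 + w * (1 - w) * ξ ^ 2 := by
  rw [hestD, ← Complex.cpow_nat_mul]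
  simp

lemma sub_mul_add_hestD_ne_zero {κ ρ ξ : ℝ} {w : ℂ} (hξ : ξ ≠ 0) (hw₀ : w ≠ 0) (hw₁ : w ≠ 1) :
    κ - ρ * ξ * w + hestD κ ρ ξ w ≠ 0 := by
  intro h
  have : w * (1 - w) * (ξ : ℂ) ^ 2 = 0 := by
    linear_combination (hestD κ ρ ξ w - (κ - ρ * ξ * w)) * h - hestD_sq κ ρ ξ w
  simp [hw₀, sub_ne_zero.2 hw₁.symm, hξ] at this

lemma hestB_eq_sinh_cosh {κ ρ ξ : ℝ} {w : ℂ} (hξ : ξ ≠ 0) (hw₀ : w ≠ 0) (hw₁ : w ≠ 1) (τ : ℝ) :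
    hestB κ ρ ξ w τ = (w ^ 2 - w) * Complex.sinh (hestD κ ρ ξ w * τ / 2) /
      ((κ - ρ * ξ * w) * Complex.sinh (hestD κ ρ ξ w * τ / 2) +
        hestD κ ρ ξ w * Complex.cosh (hestD κ ρ ξ w * τ / 2)) := by
  have hcd := sub_mul_add_hestD_ne_zero (κ := κ) (ρ := ρ) hξ hw₀ hw₁
  have hd := hestD_sq κ ρ ξ w
  rw [hestB, hestGamma]
  set d := hestD κ ρ ξ w
  rw [show -d * τ = -(2 * (d * τ / 2)) by ring, one_sub_exp_neg_two_mul,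
    one_sub_div_mul_exp_neg_two_mul hcd]
  have := Complex.exp_ne_zero (-(d * τ / 2))
  have hξ' : (ξ : ℂ) ≠ 0 := mod_cast hξ
  rw [show w ^ 2 - w = (κ - ρ * ξ * w - d) * (κ - ρ * ξ * w + d) / (ξ : ℂ) ^ 2 by
    field_simp; linear_combination hd]
  field_simp

lemma hestA_eq_sinh_cosh {κ θ ρ ξ : ℝ} {w : ℂ} (hξ : ξ ≠ 0) (hw₀ : w ≠ 0) (hw₁ : w ≠ 1)
    (τ : ℝ) :
    hestA κ θ ρ ξ w τ = (κ * θ / ξ ^ 2 : ℝ) * ((κ - ρ * ξ * w - hestD κ ρ ξ w) * τ -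
      2 * Complex.log (Complex.exp (-(hestD κ ρ ξ w * τ / 2)) *
        (((κ - ρ * ξ * w) * Complex.sinh (hestD κ ρ ξ w * τ / 2) +
          hestD κ ρ ξ w * Complex.cosh (hestD κ ρ ξ w * τ / 2)) / hestD κ ρ ξ w))) := by
  have hcd := sub_mul_add_hestD_ne_zero (κ := κ) (ρ := ρ) hξ hw₀ hw₁
  rw [hestA, hestGamma]
  set d := hestD κ ρ ξ w
  set c : ℂ := κ - ρ * ξ * w
  rw [show -d * τ = -(2 * (d * τ / 2)) by ring, one_sub_div_mul_exp_neg_two_mul hcd,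
    show 1 - (c - d) / (c + d) = 2 * d / (c + d) by field_simp; ring]
  congr 4
  field_simp

namespace Heston

/-- The rescaled squared discriminant `s² d(u/s)²`, which is polynomial in `(s, u)`; here and below
`s` stands for `√τ`. -/
def discSq (κ ρ ξ s u : ℝ) : ℝ := (κ * s - ρ * ξ * u) ^ 2 + (u * s - u ^ 2) * ξ ^ 2

/-- The square of the argument `d(u/s) s² / 2` of the hyperbolic functions in the Heston Riccati
solution. -/
def argSq (κ ρ ξ s u : ℝ) : ℝ := s ^ 2 * discSq κ ρ ξ s u / 4

/-- The common denominator `cosh z + (κ - ρξw) sinh z / d(w)` of the Riccati solution, at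
`w = u/s` and `z = d(w) s² / 2`. -/
def denom (κ ρ ξ s u : ℝ) : ℝ :=
  stumpff 0 (argSq κ ρ ξ s u) +
    s * (κ * s - ρ * ξ * u) / 2 * stumpff 1 (argSq κ ρ ξ s u)

/-- The real form of `B(u/s, s²)`: free of complex square roots and smooth up to `s = 0`. -/
def realB (κ ρ ξ s u : ℝ) : ℝ :=
  (u ^ 2 - u * s) / 2 * stumpff 1 (argSq κ ρ ξ s u) / denom κ ρ ξ s u

/-- The real form of `A(u/s, s²)`, valid where `denom` is positive. -/
def realA (κ θ ρ ξ s u : ℝ) : ℝ :=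
  κ * θ / ξ ^ 2 * (s * (κ * s - ρ * ξ * u) - 2 * Real.log (denom κ ρ ξ s u))

section ComplexForm

variable {κ θ ρ ξ s u : ℝ}

lemma hestD_sq_mul_sq (hs : s ≠ 0) :
    hestD κ ρ ξ (u / s) ^ 2 * s ^ 2 = discSq κ ρ ξ s u := by
  have : (s : ℂ) ≠ 0 := mod_cast hs
  rw [hestD_sq, discSq]
  push_cast
  field_simp

lemma hestD_ne_zero (hs : s ≠ 0) (hd : discSq κ ρ ξ s u ≠ 0) : hestD κ ρ ξ (u / s) ≠ 0 := by
  intro h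
  have := hestD_sq_mul_sq (κ := κ) (ρ := ρ) (ξ := ξ) (u := u) hs
  rw [h] at this
  exact hd (by exact_mod_cast (this.symm.trans (by simp) : (discSq κ ρ ξ s u : ℂ) = 0))

lemma hestD_mul_div_two_sq (hs : s ≠ 0) :
    (hestD κ ρ ξ (u / s) * (s ^ 2 : ℝ) / 2) ^ 2 = argSq κ ρ ξ s u := by
  rw [argSq]
  push_cast
  linear_combination (s : ℂ) ^ 2 / 4 * hestD_sq_mul_sq (κ := κ) (ρ := ρ) (ξ := ξ) (u := u) hs

lemma sinh_add_cosh_eq_denom (hs : s ≠ 0) :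
    (κ - ρ * ξ * (u / s)) * Complex.sinh (hestD κ ρ ξ (u / s) * (s ^ 2 : ℝ) / 2) +
        hestD κ ρ ξ (u / s) * Complex.cosh (hestD κ ρ ξ (u / s) * (s ^ 2 : ℝ) / 2) =
      hestD κ ρ ξ (u / s) * denom κ ρ ξ s u := by
  have hs' : (s : ℂ) ≠ 0 := mod_cast hs
  rw [sinh_eq_mul_stumpff (hestD_mul_div_two_sq hs), cosh_eq_stumpff (hestD_mul_div_two_sq hs),
    denom]
  push_cast
  field_simp
  ring

lemma hestB_eq_realB (hξ : ξ ≠ 0) (hs : s ≠ 0) (hd : discSq κ ρ ξ s u ≠ 0) (hu₀ : u ≠ 0)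
    (hu₁ : u ≠ s) : hestB κ ρ ξ (u / s) (s ^ 2) = realB κ ρ ξ s u := by
  have hs' : (s : ℂ) ≠ 0 := mod_cast hs
  have hw₁ : (u / s : ℂ) ≠ 1 := fun h => hu₁ (by exact_mod_cast eq_of_div_eq_one h)
  have := hestD_ne_zero hs hd
  rw [hestB_eq_sinh_cosh hξ (by simp [hu₀, hs]) hw₁, sinh_add_cosh_eq_denom hs,
    sinh_eq_mul_stumpff (hestD_mul_div_two_sq hs), realB]
  push_cast
  field_simp

lemma hestA_eq_realA (hξ : ξ ≠ 0) (hs : s ≠ 0) (hd : discSq κ ρ ξ s u ≠ 0) (hu₀ : u ≠ 0)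
    (hu₁ : u ≠ s) (hF : 0 < denom κ ρ ξ s u) (hx : |argSq κ ρ ξ s u| < 1) :
    hestA κ θ ρ ξ (u / s) (s ^ 2) = realA κ θ ρ ξ s u := by
  have hs' : (s : ℂ) ≠ 0 := mod_cast hs
  have hw₁ : (u / s : ℂ) ≠ 1 := fun h => hu₁ (by exact_mod_cast eq_of_div_eq_one h)
  have hd := hestD_ne_zero hs hd
  have norm_arg_lt_one : ‖hestD κ ρ ξ (u / s) * (s ^ 2 : ℝ) / 2‖ < 1 := by
    rwa [← sq_lt_one_iff₀ (norm_nonneg _), ← norm_pow, hestD_mul_div_two_sq hs, Complex.norm_real]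
  have im_arg := abs_lt.1 ((Complex.abs_im_le_norm _).trans_lt norm_arg_lt_one)
  have hpi := Real.pi_gt_three
  rw [hestA_eq_sinh_cosh hξ (by simp [hu₀, hs]) hw₁, sinh_add_cosh_eq_denom hs,
    mul_div_cancel_left₀ _ hd, Complex.log_mul_ofReal _ hF _ (Complex.exp_ne_zero _),
    Complex.log_exp (by rw [Complex.neg_im]; linarith) (by rw [Complex.neg_im]; linarith), realA]
  push_cast
  field_simp
  ring

end ComplexForm

/-! ### Small-time expansion -/

/-- The second-order remainder of `denom` in `s`: `denom = 1 - s ρξu / 2 + s² denomRemainder`. -/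
def denomRemainder (κ ρ ξ s u : ℝ) : ℝ :=
  discSq κ ρ ξ s u / 4 * stumpff 2 (argSq κ ρ ξ s u) + κ / 2 * stumpff 1 (argSq κ ρ ξ s u) -
    s * ρ * ξ * u / 2 * (discSq κ ρ ξ s u / 4) * stumpff 3 (argSq κ ρ ξ s u)

/-- The second-order remainder of `realB` in `s`: `realB = u² / 2 + s B1hat + s² realBRemainder`. -/
def realBRemainder (κ ρ ξ s u : ℝ) : ℝ :=
  ((u ^ 2 - u * s) / 2 * (discSq κ ρ ξ s u / 4) * stumpff 3 (argSq κ ρ ξ s u) -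
    (u ^ 2 / 2 + s * B1hat ρ ξ u) * denomRemainder κ ρ ξ s u +
      B1hat ρ ξ u * (ρ * ξ * u / 2)) / denom κ ρ ξ s u

section Regularity

variable {κ ρ ξ : ℝ} {p : ℝ × ℝ} {n : WithTop ℕ∞}

lemma continuous_argSq : Continuous fun p : ℝ × ℝ => argSq κ ρ ξ p.1 p.2 := by
  unfold argSq discSq
  fun_prop

lemma contDiff_denom : ContDiff ℝ n fun p : ℝ × ℝ => denom κ ρ ξ p.1 p.2 := by
  unfold denom argSq discSq
  fun_prop

lemma contDiff_denomRemainder : ContDiff ℝ n fun p : ℝ × ℝ => denomRemainder κ ρ ξ p.1 p.2 := by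
  unfold denomRemainder argSq discSq
  fun_prop

lemma contDiffAt_realB (hp : denom κ ρ ξ p.1 p.2 ≠ 0) :
    ContDiffAt ℝ n (fun p : ℝ × ℝ => realB κ ρ ξ p.1 p.2) p := by
  refine ContDiffAt.div (ContDiff.contDiffAt ?_) contDiff_denom.contDiffAt hp
  unfold argSq discSq
  fun_prop

lemma contDiffAt_realBRemainder (hp : denom κ ρ ξ p.1 p.2 ≠ 0) :
    ContDiffAt ℝ n (fun p : ℝ × ℝ => realBRemainder κ ρ ξ p.1 p.2) p := by
  refine ContDiffAt.div (ContDiff.contDiffAt ?_) contDiff_denom.contDiffAt hp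
  unfold denomRemainder argSq discSq B1hat
  fun_prop

end Regularity

section Expansion

variable {κ θ ρ ξ s u : ℝ}

lemma denom_eq (κ ρ ξ s u : ℝ) :
    denom κ ρ ξ s u = 1 + s * -(ρ * ξ * u / 2) + s ^ 2 * denomRemainder κ ρ ξ s u := by
  have h₀ := stumpff_eq_add_mul 0 (argSq κ ρ ξ s u)
  have h₁ := stumpff_eq_add_mul 1 (argSq κ ρ ξ s u)
  simp only [Nat.factorial, Nat.cast_one, inv_one, zero_add, mul_one, Nat.reduceAdd] at h₀ h₁
  rw [denom, denomRemainder, h₀]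
  linear_combination (-s * ρ * ξ * u / 2) * h₁ + (stumpff 2 (argSq κ ρ ξ s u) -
    s * ρ * ξ * u / 2 * stumpff 3 (argSq κ ρ ξ s u)) * argSq.eq_def κ ρ ξ s u

lemma realB_eq (h : denom κ ρ ξ s u ≠ 0) :
    realB κ ρ ξ s u = u ^ 2 / 2 + s * B1hat ρ ξ u + s ^ 2 * realBRemainder κ ρ ξ s u := by
  have h₁ := stumpff_eq_add_mul 1 (argSq κ ρ ξ s u)
  simp only [Nat.factorial, Nat.cast_one, inv_one, mul_one, Nat.reduceAdd] at h₁
  rw [realB, realBRemainder, div_eq_iff h, add_mul, mul_assoc (s ^ 2), div_mul_cancel₀ _ h,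
    denom_eq, B1hat]
  linear_combination
    (u ^ 2 - u * s) / 2 * (h₁ + stumpff 3 (argSq κ ρ ξ s u) * argSq.eq_def κ ρ ξ s u)

lemma eventually_denom_ne_zero (h : denom κ ρ ξ s u ≠ 0) :
    ∀ᶠ u' in 𝓝 u, denom κ ρ ξ s u' ≠ 0 :=
  (contDiff_denom (n := 0).continuous.comp (by fun_prop : Continuous fun u' : ℝ => (s, u'))
    ).continuousAt.eventually_ne h

lemma differentiableAt_realB (h : denom κ ρ ξ s u ≠ 0) :
    DifferentiableAt ℝ (realB κ ρ ξ s) u :=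
  (hasDerivAt_right_of_differentiableAt
    ((contDiffAt_realB (p := (s, u)) h).differentiableAt one_ne_zero)).differentiableAt

lemma deriv_realB (h : denom κ ρ ξ s u ≠ 0) :
    deriv (realB κ ρ ξ s) u =
      u + s * B1hat' ρ ξ u + s ^ 2 * deriv (realBRemainder κ ρ ξ s) u := by
  have expansion : realB κ ρ ξ s =ᶠ[𝓝 u] fun u' =>
      u' ^ 2 / 2 + s * B1hat ρ ξ u' + s ^ 2 * realBRemainder κ ρ ξ s u' :=
    (eventually_denom_ne_zero h).mono fun _ => realB_eq
  have hN : DifferentiableAt ℝ (realBRemainder κ ρ ξ s) u :=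
    (hasDerivAt_right_of_differentiableAt
      ((contDiffAt_realBRemainder (p := (s, u)) h).differentiableAt one_ne_zero)).differentiableAt
  have := (((hasDerivAt_pow 2 u).div_const 2).add ((hasDerivAt_B1hat ρ ξ u).const_mul s)).add
    (hN.hasDerivAt.const_mul (s ^ 2))
  rw [expansion.deriv_eq]
  refine this.deriv.trans ?_
  norm_num

lemma hasDerivAt_denom : HasDerivAt (denom κ ρ ξ s)
    (s * -(ρ * ξ / 2) + s ^ 2 * deriv (denomRemainder κ ρ ξ s) u) u := by
  have hf : DifferentiableAt ℝ (denomRemainder κ ρ ξ s) u :=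
    (hasDerivAt_right_of_differentiableAt
      (contDiff_denomRemainder.contDiffAt.differentiableAt one_ne_zero)).differentiableAt
  rw [funext (denom_eq κ ρ ξ s)]
  have := ((((hasDerivAt_id u).const_mul (ρ * ξ)).div_const 2).neg.const_mul s).const_add 1
  exact (this.add (hf.hasDerivAt.const_mul (s ^ 2))).congr_deriv (by simp)

lemma hasDerivAt_realA (h : denom κ ρ ξ s u ≠ 0) :
    HasDerivAt (realA κ θ ρ ξ s) (s * (κ * θ / ξ ^ 2 * (-(ρ * ξ) -
      2 * (-(ρ * ξ / 2) + s * deriv (denomRemainder κ ρ ξ s) u) / denom κ ρ ξ s u))) u := by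
  have := ((((hasDerivAt_id u).const_mul (ρ * ξ)).const_sub (κ * s)).const_mul s).sub
    ((hasDerivAt_denom.log h).const_mul 2)
  refine (this.const_mul (κ * θ / ξ ^ 2)).congr_deriv ?_
  field_simp

end Expansion

/-- The region in which the real forms of the Heston functions agree with their principal branches:
`denom` stays away from the cut of the logarithm, and the argument `d(w) s² / 2` of the hyperbolic
functions lies in the unit disc. -/
def Regular (κ ρ ξ s u : ℝ) : Prop := 0 < denom κ ρ ξ s u ∧ |argSq κ ρ ξ s u| < 1

section Regular

variable {κ θ ρ ξ s u : ℝ} {K : Set ℝ}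

lemma isOpen_regular : IsOpen {p : ℝ × ℝ | Regular κ ρ ξ p.1 p.2} :=
  (isOpen_lt continuous_const (contDiff_denom (n := 0)).continuous).inter
    (isOpen_lt continuous_argSq.abs continuous_const)

lemma regular_zero (κ ρ ξ u : ℝ) : Regular κ ρ ξ 0 u := by
  constructor
  · rw [denom_eq]
    norm_num
  · simp [argSq]

lemma eventually_regular : ∀ᶠ p in 𝓝ˢ ({0} ×ˢ K), Regular κ ρ ξ p.1 p.2 :=
  isOpen_regular.mem_nhdsSet.2 <| by
    rintro ⟨s, u⟩ ⟨rfl, -⟩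
    exact regular_zero κ ρ ξ u

lemma Regular.eventually (h : Regular κ ρ ξ s u) : ∀ᶠ u' in 𝓝 u, Regular κ ρ ξ s u' :=
  (Continuous.prodMk_right s).continuousAt.eventually (isOpen_regular.mem_nhds h)

lemma realB_isBigO (hK : IsCompact K) :
    (fun p : ℝ × ℝ => realB κ ρ ξ p.1 p.2 - (p.2 ^ 2 / 2 + p.1 * B1hat ρ ξ p.2))
      =O[𝓝ˢ ({0} ×ˢ K)] fun p => p.1 ^ 2 := by
  have : (fun p : ℝ × ℝ => realBRemainder κ ρ ξ p.1 p.2) =O[𝓝ˢ ({0} ×ˢ K)] fun _ => (1 : ℝ) :=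
    isBigO_one_nhdsSet (isCompact_singleton.prod hK) <| by
      rintro ⟨s, u⟩ ⟨rfl, -⟩
      exact (contDiffAt_realBRemainder (n := 0) (p := (0, u))
        (regular_zero κ ρ ξ u).1.ne').continuousAt
  refine ((isBigO_refl (fun p : ℝ × ℝ => p.1 ^ 2) _).mul this).congr' ?_ (by simp)
  filter_upwards [eventually_regular] with p hp
  rw [realB_eq hp.1.ne']
  ring

lemma deriv_realB_isBigO (hK : IsCompact K) :
    (fun p : ℝ × ℝ => deriv (realB κ ρ ξ p.1) p.2 - (p.2 + p.1 * B1hat' ρ ξ p.2))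
      =O[𝓝ˢ ({0} ×ˢ K)] fun p => p.1 ^ 2 := by
  have : (fun p : ℝ × ℝ => deriv (realBRemainder κ ρ ξ p.1) p.2)
      =O[𝓝ˢ ({0} ×ˢ K)] fun _ => (1 : ℝ) :=
    isBigO_one_nhdsSet (isCompact_singleton.prod hK) <| by
      rintro ⟨s, u⟩ ⟨rfl, -⟩
      exact continuousAt_deriv_right
        (contDiffAt_realBRemainder (p := (0, u)) (regular_zero κ ρ ξ u).1.ne')
  refine ((isBigO_refl (fun p : ℝ × ℝ => p.1 ^ 2) _).mul this).congr' ?_ (by simp)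
  filter_upwards [eventually_regular] with p hp
  rw [deriv_realB hp.1.ne']
  ring

lemma deriv_realA_isBigO (hK : IsCompact K) :
    (fun p : ℝ × ℝ => deriv (realA κ θ ρ ξ p.1) p.2) =O[𝓝ˢ ({0} ×ˢ K)] fun p => p.1 := by
  have : (fun p : ℝ × ℝ => κ * θ / ξ ^ 2 * (-(ρ * ξ) - 2 * (-(ρ * ξ / 2) +
      p.1 * deriv (denomRemainder κ ρ ξ p.1) p.2) / denom κ ρ ξ p.1 p.2))
      =O[𝓝ˢ ({0} ×ˢ K)] fun _ => (1 : ℝ) :=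
    isBigO_one_nhdsSet (isCompact_singleton.prod hK) <| by
      rintro ⟨s, u⟩ ⟨rfl, -⟩
      have := continuousAt_deriv_right
        (contDiff_denomRemainder (κ := κ) (ρ := ρ) (ξ := ξ)).contDiffAt (p := (0, u))
      have := (contDiff_denom (κ := κ) (ρ := ρ) (ξ := ξ) (n := 0)).continuous.continuousAt
        (x := (0, u))
      have := (regular_zero κ ρ ξ u).1.ne'
      fun_prop (disch := assumption)
  refine ((isBigO_refl (fun p : ℝ × ℝ => p.1) _).mul this).congr' ?_ (by simp)
  filter_upwards [eventually_regular] with p hp using (hasDerivAt_realA hp.1.ne').deriv.symm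

lemma eventually_hestB_eq_realB_and_hestA_eq (hκ : κ ≠ 0) (hξ : ξ ≠ 0) (hs : s ≠ 0)
    (h : Regular κ ρ ξ s u) : ∀ᶠ u' in 𝓝[≠] u,
      hestB κ ρ ξ ((u' : ℝ) / s) (s ^ 2) = realB κ ρ ξ s u' ∧
        hestA κ θ ρ ξ ((u' : ℝ) / s) (s ^ 2) = realA κ θ ρ ξ s u' := by
  let P : Polynomial ℝ := (.C (κ * s) - .C (ρ * ξ) * .X) ^ 2 + (.X * .C s - .X ^ 2) * .C (ξ ^ 2)
  have eval_P (u' : ℝ) : P.eval u' = discSq κ ρ ξ s u' := by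
    simp [P, discSq, mul_comm s]
  have hP : P ≠ 0 := by
    intro hP
    have : (κ * s) ^ 2 = 0 := by simpa [hP, discSq] using (eval_P 0).symm
    exact pow_ne_zero 2 (mul_ne_zero hκ hs) this
  filter_upwards [eventually_eval_ne_zero hP u, eventually_eval_ne_zero Polynomial.X_ne_zero u,
    eventually_eval_ne_zero (Polynomial.X_sub_C_ne_zero s) u,
    h.eventually.filter_mono nhdsWithin_le_nhds] with u' hd hu₀ hu₁ hreg
  rw [eval_P] at hd
  rw [Polynomial.eval_X] at hu₀
  rw [Polynomial.eval_sub, Polynomial.eval_X, Polynomial.eval_C, sub_ne_zero] at hu₁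
  exact ⟨hestB_eq_realB hξ hs hd hu₀ hu₁, hestA_eq_realA hξ hs hd hu₀ hu₁ hreg.1 hreg.2⟩

end Regular

/-! ### Domain and saddle-point equation -/

/-- The argument `1 - 2 β_t B(u/s, s²)` of the outer logarithm of the forward log-mgf, in real
form. -/
def logArg (κ ρ ξ t s u : ℝ) : ℝ := 1 - 2 * betaT κ ξ t * realB κ ρ ξ s u

/-- The real form of the rescaled forward log-mgf at `τ = s²`, valid where `logArg` is positive. -/
def realLambda (κ θ ξ v ρ t s u : ℝ) : ℝ :=
  s * (realA κ θ ρ ξ s u + realB κ ρ ξ s u * v * Real.exp (-(κ * t)) / logArg κ ρ ξ t s u -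
    2 * κ * θ / ξ ^ 2 * Real.log (logArg κ ρ ξ t s u))

section Domain

variable {κ θ ξ v ρ t s u : ℝ}

lemma logArg_zero (κ ρ ξ t u : ℝ) : logArg κ ρ ξ t 0 u = 1 - betaT κ ξ t * u ^ 2 := by
  rw [logArg, realB_eq (regular_zero κ ρ ξ u).1.ne']
  ring

lemma contDiffAt_logArg {p : ℝ × ℝ} {n : WithTop ℕ∞} (hp : Regular κ ρ ξ p.1 p.2) :
    ContDiffAt ℝ n (fun p : ℝ × ℝ => logArg κ ρ ξ t p.1 p.2) p :=
  contDiffAt_const.sub (contDiffAt_const.mul (contDiffAt_realB hp.1.ne'))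

lemma hasDerivAt_logArg (h : Regular κ ρ ξ s u) : HasDerivAt (logArg κ ρ ξ t s)
    (-(2 * betaT κ ξ t * deriv (realB κ ρ ξ s) u)) u :=
  ((differentiableAt_realB h.1.ne').hasDerivAt.const_mul _).const_sub 1

lemma hestLambda_eq (hs : 0 < s) (hB : hestB κ ρ ξ (u / s) (s ^ 2) = realB κ ρ ξ s u)
    (hA : hestA κ θ ρ ξ (u / s) (s ^ 2) = realA κ θ ρ ξ s u) :
    hestLambda κ θ ξ v ρ t (s ^ 2) u =
      (s * (realA κ θ ρ ξ s u +
        realB κ ρ ξ s u * v * Real.exp (-(κ * t)) / logArg κ ρ ξ t s u) : ℝ) -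
      (s * (2 * κ * θ / ξ ^ 2) : ℝ) * Complex.log (logArg κ ρ ξ t s u) := by
  rw [hestLambda, hestLambdaC, Real.sqrt_sq hs.le, hestG, hB, hA, logArg]
  push_cast
  ring

lemma hestLambda_im_ne_zero (hκ : κ ≠ 0) (hθ : θ ≠ 0) (hξ : ξ ≠ 0) (hs : 0 < s)
    (hB : hestB κ ρ ξ (u / s) (s ^ 2) = realB κ ρ ξ s u)
    (hA : hestA κ θ ρ ξ (u / s) (s ^ 2) = realA κ θ ρ ξ s u)
    (hΦ : logArg κ ρ ξ t s u < 0) : (hestLambda κ θ ξ v ρ t (s ^ 2) u).im ≠ 0 := by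
  rw [hestLambda_eq hs hB hA, Complex.sub_im, Complex.ofReal_im, Complex.im_ofReal_mul,
    Complex.log_im, Complex.arg_ofReal_of_neg hΦ]
  simp [hs.ne', hκ, hθ, hξ, Real.pi_ne_zero]

lemma eventually_logArg_nonneg (hκ : κ ≠ 0) (hθ : θ ≠ 0) (hξ : ξ ≠ 0) (hs : 0 < s)
    (h : Regular κ ρ ξ s u)
    (hu : u ∈ interior {u : ℝ | (hestLambda κ θ ξ v ρ t (s ^ 2) u).im = 0}) :
    ∀ᶠ u' in 𝓝 u, 0 ≤ logArg κ ρ ξ t s u' := by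
  have punctured : ∀ᶠ u' in 𝓝[≠] u, 0 ≤ logArg κ ρ ξ t s u' := by
    filter_upwards [eventually_hestB_eq_realB_and_hestA_eq (θ := θ) hκ hξ hs.ne' h,
      mem_nhdsWithin_of_mem_nhds (mem_interior_iff_mem_nhds.1 hu)] with u' ⟨hB, hA⟩ hreal
    exact not_lt.1 fun hneg => hestLambda_im_ne_zero hκ hθ hξ hs hB hA hneg hreal
  have center : 0 ≤ logArg κ ρ ξ t s u :=
    ge_of_tendsto ((hasDerivAt_logArg h).continuousAt.tendsto.mono_left nhdsWithin_le_nhds)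
      punctured
  rw [← nhdsNE_sup_pure, eventually_sup]
  exact ⟨punctured, center⟩

lemma zero_mem_hestDom {τ : ℝ} (hu : u ∈ hestDom κ θ ξ v ρ t τ) :
    (0 : ℝ) ∈ hestDom κ θ ξ v ρ t τ :=
  mem_connectedComponentIn (connectedComponentIn_nonempty_iff.1 ⟨u, hu⟩)

lemma hestDom_subset_interior {τ : ℝ} : hestDom κ θ ξ v ρ t τ ⊆
    interior {u : ℝ | (hestLambda κ θ ξ v ρ t τ u).im = 0} :=
  connectedComponentIn_subset _ _

lemma ordConnected_hestDom (κ θ ξ v ρ t τ : ℝ) : (hestDom κ θ ξ v ρ t τ).OrdConnected :=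
  isPreconnected_connectedComponentIn.ordConnected

lemma eventually_notMem_hestDom (hκ : κ ≠ 0) (hθ : θ ≠ 0) (hξ : ξ ≠ 0)
    (hu : 1 < betaT κ ξ t * u ^ 2) :
    ∀ᶠ s in 𝓝[>] (0 : ℝ), u ∉ hestDom κ θ ξ v ρ t (s ^ 2) := by
  have path : Tendsto (fun s : ℝ => (s, u)) (𝓝[>] 0) (𝓝 (0, u)) :=
    (Continuous.prodMk_left u).continuousAt.tendsto.mono_left nhdsWithin_le_nhds
  have neg : ∀ᶠ p in 𝓝 ((0, u) : ℝ × ℝ), logArg κ ρ ξ t p.1 p.2 < 0 := by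
    refine (contDiffAt_logArg (n := 0) (p := (0, u))
      (regular_zero κ ρ ξ u)).continuousAt.eventually_lt_const ?_
    simpa only [logArg_zero, sub_neg] using hu
  filter_upwards [self_mem_nhdsWithin, path.eventually neg,
    path.eventually (isOpen_regular.mem_nhds (regular_zero κ ρ ξ u))] with s hs hneg hreg hmem
  exact hneg.not_ge (eventually_logArg_nonneg hκ hθ hξ hs hreg
    (hestDom_subset_interior hmem)).self_of_nhds

lemma eventually_hestDom_subset_Icc (hκ : κ ≠ 0) (hθ : θ ≠ 0) (hξ : ξ ≠ 0) {R : ℝ} (hR₀ : 0 ≤ R)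
    (hR : 1 < betaT κ ξ t * R ^ 2) :
    ∀ᶠ s in 𝓝[>] (0 : ℝ), hestDom κ θ ξ v ρ t (s ^ 2) ⊆ Set.Icc (-R) R := by
  filter_upwards [eventually_notMem_hestDom hκ hθ hξ hR,
    eventually_notMem_hestDom (u := -R) hκ hθ hξ (by rwa [neg_sq])] with s hpos hneg u hu
  have hconn := ordConnected_hestDom κ θ ξ v ρ t (s ^ 2)
  have h₀ := zero_mem_hestDom hu
  constructor <;> by_contra! hlt
  · exact hneg (hconn.out hu h₀ ⟨hlt.le, by linarith⟩)
  · exact hpos (hconn.out h₀ hu ⟨hR₀, hlt.le⟩)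

lemma eventually_logArg_sq_add_deriv_sq_pos {K : Set ℝ} :
    ∀ᶠ p in 𝓝ˢ ({0} ×ˢ K),
      0 < logArg κ ρ ξ t p.1 p.2 ^ 2 + deriv (realB κ ρ ξ p.1) p.2 ^ 2 := by
  rw [eventually_nhdsSet_iff_forall]
  rintro ⟨s, u⟩ ⟨rfl, -⟩
  have hreg := regular_zero κ ρ ξ u
  have cont : ContinuousAt (fun p : ℝ × ℝ =>
      logArg κ ρ ξ t p.1 p.2 ^ 2 + deriv (realB κ ρ ξ p.1) p.2 ^ 2) (0, u) :=
    ((contDiffAt_logArg (n := 0) (p := (0, u)) hreg).continuousAt.pow 2).add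
      ((continuousAt_deriv_right (contDiffAt_realB (p := (0, u)) hreg.1.ne')).pow 2)
  refine cont.eventually_const_lt ?_
  simp only [logArg_zero, deriv_realB hreg.1.ne', zero_mul, add_zero, zero_pow two_ne_zero]
  rcases eq_or_ne u 0 with rfl | hu
  · norm_num
  · positivity

lemma logArg_pos (hβ : betaT κ ξ t ≠ 0) (h : Regular κ ρ ξ s u)
    (hnonneg : ∀ᶠ u' in 𝓝 u, 0 ≤ logArg κ ρ ξ t s u')
    (hsq : 0 < logArg κ ρ ξ t s u ^ 2 + deriv (realB κ ρ ξ s) u ^ 2) :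
    0 < logArg κ ρ ξ t s u := by
  refine hnonneg.self_of_nhds.lt_of_ne' fun hzero => ?_
  have isMin : IsLocalMin (logArg κ ρ ξ t s) u := hnonneg.mono fun u' h' => hzero.trans_le h'
  have critical := isMin.hasDerivAt_eq_zero (hasDerivAt_logArg h)
  simp only [neg_eq_zero, mul_eq_zero, OfNat.ofNat_ne_zero, hβ, or_self, false_or] at critical
  simp [hzero, critical] at hsq

end Domain

section SaddleEquation

variable {κ θ ξ v ρ t s u k : ℝ}

lemma hasDerivAt_realLambda (h : Regular κ ρ ξ s u) (hΦ : 0 < logArg κ ρ ξ t s u) :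
    HasDerivAt (realLambda κ θ ξ v ρ t s) (s * (deriv (realA κ θ ρ ξ s) u * logArg κ ρ ξ t s u ^ 2 +
      v * Real.exp (-(κ * t)) * deriv (realB κ ρ ξ s) u +
      4 * κ * θ * betaT κ ξ t / ξ ^ 2 * deriv (realB κ ρ ξ s) u * logArg κ ρ ξ t s u) /
        logArg κ ρ ξ t s u ^ 2) u := by
  have hA := (hasDerivAt_realA (θ := θ) h.1.ne').differentiableAt.hasDerivAt
  have hB := (differentiableAt_realB h.1.ne').hasDerivAt
  have hL := hasDerivAt_logArg (t := t) h
  have hBΦ := ((hB.mul_const v).mul_const (Real.exp (-(κ * t)))).div hL hΦ.ne'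
  refine (((hA.add hBΦ).sub ((hL.log hΦ.ne').const_mul (2 * κ * θ / ξ ^ 2))).const_mul s
    ).congr_deriv ?_
  have hΦ' := hΦ.ne'
  field_simp
  rw [logArg]
  ring

lemma hestLambda_eventuallyEq_nhdsNE (hκ : κ ≠ 0) (hξ : ξ ≠ 0) (hs : 0 < s)
    (h : Regular κ ρ ξ s u) (hΦ : 0 < logArg κ ρ ξ t s u) :
    hestLambda κ θ ξ v ρ t (s ^ 2) =ᶠ[𝓝[≠] u] fun u' => realLambda κ θ ξ v ρ t s u' := by
  have pos : ∀ᶠ u' in 𝓝 u, 0 < logArg κ ρ ξ t s u' :=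
    (hasDerivAt_logArg h).continuousAt.eventually_const_lt hΦ
  filter_upwards [eventually_hestB_eq_realB_and_hestA_eq (θ := θ) hκ hξ hs.ne' h,
    pos.filter_mono nhdsWithin_le_nhds] with u' ⟨hB, hA⟩ hΦ'
  rw [hestLambda_eq hs hB hA, ← Complex.ofReal_log hΦ'.le, realLambda]
  push_cast
  ring

lemma saddle_equation (hκ : κ ≠ 0) (hξ : ξ ≠ 0) (hs : 0 < s) (hk : k ≠ 0)
    (h : Regular κ ρ ξ s u) (hΦ : 0 < logArg κ ρ ξ t s u)
    (hu : deriv (hestLambda κ θ ξ v ρ t (s ^ 2)) u = k) :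
    s * (deriv (realA κ θ ρ ξ s) u * logArg κ ρ ξ t s u ^ 2 +
      v * Real.exp (-(κ * t)) * deriv (realB κ ρ ξ s) u +
      4 * κ * θ * betaT κ ξ t / ξ ^ 2 * deriv (realB κ ρ ξ s) u * logArg κ ρ ξ t s u) =
        k * logArg κ ρ ξ t s u ^ 2 := by
  have hdiff : DifferentiableAt ℝ (hestLambda κ θ ξ v ρ t (s ^ 2)) u :=
    differentiableAt_of_deriv_ne_zero (by rw [hu]; exact_mod_cast hk)
  have hreal := (hasDerivAt_realLambda (θ := θ) (v := v) h hΦ).ofReal_comp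
  have heq : hestLambda κ θ ξ v ρ t (s ^ 2) =ᶠ[𝓝 u] fun u' => (realLambda κ θ ξ v ρ t s u' : ℂ) :=
    (hdiff.continuousAt.eventuallyEq_nhds_iff_eventuallyEq_nhdsNE hreal.continuousAt).1
      (hestLambda_eventuallyEq_nhdsNE hκ hξ hs h hΦ)
  rw [heq.deriv_eq, hreal.deriv] at hu
  exact (div_eq_iff (pow_ne_zero 2 hΦ.ne')).1 (Complex.ofReal_injective hu)

end SaddleEquation

end Heston

/-! ### Asymptotics of saddle paths -/

/-- A solution path `u` of the saddle-point equation `Λ_τ'(u) = k`, in the variable `r = τ^{1/4}`: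
`φ` is the value of `1 - 2 β_t B` at the saddle point, `b` and `a` are the `u`-derivatives of `B`
and `A` there, and `E = v e^{-κt}`, `m = 4κθβ_t/ξ²`. -/
structure IsSaddlePath (β E m k ρ ξ : ℝ) (u φ b a : ℝ → ℝ) : Prop where
  isBigO_one : u =O[𝓝[>] 0] fun _ => (1 : ℝ)
  eventually_pos : ∀ᶠ r in 𝓝[>] 0, 0 < φ r
  phi_isBigO : (fun r => φ r - (1 - β * u r ^ 2 - 2 * β * r ^ 2 * B1hat ρ ξ (u r)))
    =O[𝓝[>] 0] fun r => r ^ 4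
  b_isBigO : (fun r => b r - (u r + r ^ 2 * B1hat' ρ ξ (u r))) =O[𝓝[>] 0] fun r => r ^ 4
  a_isBigO : a =O[𝓝[>] 0] fun r => r ^ 2
  equation : ∀ᶠ r in 𝓝[>] 0,
    r ^ 2 * (a r * φ r ^ 2 + E * b r + m * b r * φ r) = k * φ r ^ 2

/-- The coefficients `aᵢ` of the expansion of `u` and `eᵢ` of that of `φ / r` along a saddle path,
characterised by matching the first three powers of `r` in the saddle-point equations. -/
structure IsSaddleExpansion (β E m k ρ ξ a₀ a₁ a₂ a₃ e₀ e₁ e₂ : ℝ) : Prop where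
  mul_sq : β * a₀ ^ 2 = 1
  k_mul_pos : 0 < k * a₀
  e₀_pos : 0 < e₀
  e₀_eq : e₀ = -2 * β * a₀ * a₁
  e₁_eq : e₁ = -2 * β * a₀ * a₂ - β * a₁ ^ 2 - 2 * β * B1hat ρ ξ a₀
  e₂_eq : e₂ = -2 * β * a₀ * a₃ - 2 * β * a₁ * a₂ - 2 * β * a₁ * B1hat' ρ ξ a₀
  order_zero : k * e₀ ^ 2 = E * a₀
  order_one : 2 * k * e₀ * e₁ = E * a₁ + m * e₀ * a₀
  order_two : k * (e₁ ^ 2 + 2 * e₀ * e₂) =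
    E * (a₂ + B1hat' ρ ξ a₀) + m * (e₀ * a₁ + e₁ * a₀)

/-- The saddle-point equations for the rescaled unknowns `z = (u - a₀) / r` and `y = φ / r`, as a
map of `(r, z, y)`: up to higher-order terms a saddle path is a zero of this map. -/
def saddleMap (β E m k ρ ξ a₀ : ℝ) (p : ℝ × ℝ × ℝ) : ℝ × ℝ :=
  (p.2.2 + β * p.2.1 * (2 * a₀ + p.1 * p.2.1) + 2 * β * p.1 * B1hat ρ ξ (a₀ + p.1 * p.2.1),
    k * p.2.2 ^ 2 - (E + m * (p.1 * p.2.2)) *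
      (a₀ + p.1 * p.2.1 + p.1 ^ 2 * B1hat' ρ ξ (a₀ + p.1 * p.2.1)))

section SaddleMap

variable {β E m k ρ ξ a₀ a₁ a₂ a₃ e₀ e₁ e₂ : ℝ}

lemma contDiff_saddleMap {n : WithTop ℕ∞} : ContDiff ℝ n (saddleMap β E m k ρ ξ a₀) := by
  have := contDiff_B1hat (ρ := ρ) (ξ := ξ) (n := n)
  have := contDiff_B1hat' (ρ := ρ) (ξ := ξ) (n := n)
  unfold saddleMap
  fun_prop

lemma fderiv_saddleMap_zero_apply (a e : ℝ) (h : ℝ × ℝ) :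
    fderiv ℝ (saddleMap β E m k ρ ξ a₀) (0, a, e) (0, h) =
      (h.2 + 2 * β * a₀ * h.1, 2 * k * e * h.2) := by
  have line : HasDerivAt (fun x : ℝ => ((0, a + x * h.1, e + x * h.2) : ℝ × ℝ × ℝ))
      ((0, 1 * h.1, 1 * h.2) : ℝ × ℝ × ℝ) 0 :=
    (hasDerivAt_const _ _).prodMk ((((hasDerivAt_id 0).mul_const _).const_add _).prodMk
      (((hasDerivAt_id 0).mul_const _).const_add _))
  have chain := ((contDiff_saddleMap (β := β) (E := E) (m := m) (k := k) (ρ := ρ) (ξ := ξ)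
    (a₀ := a₀)).differentiable one_ne_zero (0, a, e)).hasFDerivAt.comp_hasDerivAt_of_eq 0 line
      (by simp)
  have direct : HasDerivAt (fun x : ℝ => saddleMap β E m k ρ ξ a₀ (0, a + x * h.1, e + x * h.2))
      (1 * h.2 + β * (1 * h.1) * (2 * a₀), k * (2 * (e + 0 * h.2) * (1 * h.2))) 0 := by
    have hy := ((hasDerivAt_id (0 : ℝ)).mul_const h.2).const_add e
    have hz := (((hasDerivAt_id (0 : ℝ)).mul_const h.1).const_add a).const_mul β
    convert (hy.add (hz.mul_const (2 * a₀))).prodMk (((hy.pow 2).const_mul k).sub_const (E * a₀))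
      using 1
    · ext x <;> simp [saddleMap]
    · ext <;> simp
  have := chain.unique direct
  simp only [one_mul] at this
  rw [this]
  ext <;> ring

lemma saddleMap_expansion_isBigO (h : IsSaddleExpansion β E m k ρ ξ a₀ a₁ a₂ a₃ e₀ e₁ e₂) :
    (fun r : ℝ => saddleMap β E m k ρ ξ a₀
      (r, a₁ + a₂ * r + a₃ * r ^ 2, e₀ + e₁ * r + e₂ * r ^ 2)) =O[𝓝 0] fun r => r ^ 3 := by
  let z (r : ℝ) := a₁ + a₂ * r + a₃ * r ^ 2
  let R₁ (r : ℝ) := β * (a₂ ^ 2 + 2 * a₁ * a₃ + 2 * a₂ * a₃ * r + a₃ ^ 2 * r ^ 2) +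
    2 * β * (B1hat' ρ ξ a₀ * (a₂ + r * a₃) + ρ * ξ / 4 * z r ^ 2 * (3 * a₀ + r * z r))
  let c := a₂ + B1hat' ρ ξ a₀
  let R₂ (r : ℝ) := k * (2 * e₁ * e₂ + e₂ ^ 2 * r) -
    m * (e₀ * c + e₁ * (a₁ + c * r) + e₂ * (a₀ + a₁ * r + c * r ^ 2)) -
    (E + m * (r * (e₀ + e₁ * r + e₂ * r ^ 2))) *
      (a₃ + 3 * (ρ * ξ) / 4 * z r * (2 * a₀ + r * z r))
  have factor (r : ℝ) : saddleMap β E m k ρ ξ a₀ (r, z r, e₀ + e₁ * r + e₂ * r ^ 2) =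
      r ^ 3 • (R₁ r, R₂ r) := by
    simp only [saddleMap, B1hat_add, B1hat'_add, Prod.smul_mk, smul_eq_mul, Prod.mk.injEq,
      R₁, R₂, z, c]
    constructor
    · linear_combination h.e₀_eq + r * h.e₁_eq + r ^ 2 * h.e₂_eq
    · linear_combination h.order_zero + r * h.order_one + r ^ 2 * h.order_two
  have cont : Continuous fun r => (R₁ r, R₂ r) := by
    simp only [R₁, R₂, z]
    fun_prop
  have := (isBigO_refl (fun r : ℝ => r ^ 3) (𝓝 0)).smul
    ((cont.continuousAt (x := 0)).tendsto.isBigO_one ℝ)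
  exact this.congr (fun r => (factor r).symm) fun r => mul_one _

lemma two_mul_mul_ne_zero_of_mul_sq (h : β * a₀ ^ 2 = 1) : 2 * β * a₀ ≠ 0 := by
  have : 2 * β * a₀ * a₀ = 2 := by linear_combination 2 * h
  exact left_ne_zero_of_mul (this ▸ two_ne_zero)

namespace IsSaddleExpansion

lemma E_pos (h : IsSaddleExpansion β E m k ρ ξ a₀ a₁ a₂ a₃ e₀ e₁ e₂) : 0 < E := by
  have : E * a₀ ^ 2 = k * a₀ * e₀ ^ 2 := by linear_combination -a₀ * h.order_zero
  exact pos_of_mul_pos_left (this ▸ mul_pos h.k_mul_pos (pow_pos h.e₀_pos 2)) (sq_nonneg a₀)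

lemma fderiv_saddleMap_injective (h : IsSaddleExpansion β E m k ρ ξ a₀ a₁ a₂ a₃ e₀ e₁ e₂)
    (x : ℝ × ℝ) (hx : fderiv ℝ (saddleMap β E m k ρ ξ a₀) (0, a₁, e₀) (0, x) = 0) : x = 0 := by
  have hk : k ≠ 0 := left_ne_zero_of_mul h.k_mul_pos.ne'
  simp only [fderiv_saddleMap_zero_apply, Prod.mk_eq_zero, mul_eq_zero, two_ne_zero, hk,
    h.e₀_pos.ne', false_or] at hx
  obtain ⟨hfst, hsnd⟩ := hx
  rw [hsnd, zero_add] at hfst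
  exact Prod.ext ((mul_eq_zero.1 hfst).resolve_left (two_mul_mul_ne_zero_of_mul_sq h.mul_sq)) hsnd

end IsSaddleExpansion

end SaddleMap

section SaddlePath

variable {β E m k ρ ξ a₀ a₁ a₂ a₃ e₀ e₁ e₂ : ℝ} {u φ b a : ℝ → ℝ}

namespace IsSaddlePath

lemma b_sub_isBigO (h : IsSaddlePath β E m k ρ ξ u φ b a) :
    (fun r => b r - u r) =O[𝓝[>] 0] fun r => r ^ 2 := by
  have hB := isBigO_one_comp_of_continuous (contDiff_B1hat' (ρ := ρ) (ξ := ξ) (n := 0)).continuous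
    h.isBigO_one
  have := (h.b_isBigO.trans (isBigO_pow_nhdsGT_zero (j := 2) (by norm_num))).add
    (((isBigO_refl (fun r : ℝ => r ^ 2) _).mul hB).congr_right fun _ => mul_one _)
  exact this.congr_left fun r => by ring

lemma one_sub_sub_phi_isBigO (h : IsSaddlePath β E m k ρ ξ u φ b a) :
    (fun r => 1 - β * u r ^ 2 - φ r) =O[𝓝[>] 0] fun r => r ^ 2 := by
  have hB := isBigO_one_comp_of_continuous (f := fun x => 2 * β * B1hat ρ ξ x)
    (continuous_const.mul (contDiff_B1hat (n := 0)).continuous) h.isBigO_one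
  have := (((isBigO_refl (fun r : ℝ => r ^ 2) _).mul hB).congr_right fun _ => mul_one _).sub
    (h.phi_isBigO.trans (isBigO_pow_nhdsGT_zero (j := 2) (by norm_num)))
  exact this.congr_left fun r => by ring

lemma b_isBigO_one (h : IsSaddlePath β E m k ρ ξ u φ b a) :
    b =O[𝓝[>] 0] fun _ => (1 : ℝ) := by
  have := h.b_sub_isBigO.trans ((tendsto_pow_nhdsGT_zero two_ne_zero).isBigO_one ℝ)
  simpa using this.add h.isBigO_one

lemma phi_isBigO_one (h : IsSaddlePath β E m k ρ ξ u φ b a) :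
    φ =O[𝓝[>] 0] fun _ => (1 : ℝ) := by
  have hu := isBigO_one_comp_of_continuous (f := fun x => 1 - β * x ^ 2) (by fun_prop) h.isBigO_one
  simpa using hu.sub
    (h.one_sub_sub_phi_isBigO.trans ((tendsto_pow_nhdsGT_zero two_ne_zero).isBigO_one ℝ))

lemma a_tendsto (h : IsSaddlePath β E m k ρ ξ u φ b a) : Tendsto a (𝓝[>] 0) (𝓝 0) :=
  h.a_isBigO.trans_tendsto (tendsto_pow_nhdsGT_zero two_ne_zero)

lemma phi_sq_isBigO (h : IsSaddlePath β E m k ρ ξ u φ b a) (hk : k ≠ 0) :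
    (fun r => φ r ^ 2) =O[𝓝[>] 0] fun r => r ^ 2 := by
  have bounded : (fun r => a r * φ r ^ 2 + E * b r + m * b r * φ r) =O[𝓝[>] 0] fun _ => (1 : ℝ) :=
    isBigO_one_comp_of_continuous
      (f := fun p : ℝ × ℝ × ℝ => p.1 * p.2.1 ^ 2 + E * p.2.2 + m * p.2.2 * p.2.1) (by fun_prop)
      ((h.a_tendsto.isBigO_one ℝ).prod_left (h.phi_isBigO_one.prod_left h.b_isBigO_one))
  have := ((isBigO_refl (fun r : ℝ => r ^ 2) _).mul bounded).congr' h.equation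
    (.of_forall fun _ => mul_one _)
  exact (isBigO_const_mul_left_iff hk).1 this

lemma phi_tendsto (h : IsSaddlePath β E m k ρ ξ u φ b a) (hk : k ≠ 0) :
    Tendsto φ (𝓝[>] 0) (𝓝 0) := by
  refine tendsto_nhds_of_sq le_rfl (h.eventually_pos.mono fun r hr => hr.le) ?_
  simpa using (h.phi_sq_isBigO hk).trans_tendsto (tendsto_pow_nhdsGT_zero two_ne_zero)

lemma mul_sq_tendsto (h : IsSaddlePath β E m k ρ ξ u φ b a) (hk : k ≠ 0) :
    Tendsto (fun r => β * u r ^ 2) (𝓝[>] 0) (𝓝 1) := by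
  have := (h.one_sub_sub_phi_isBigO.trans_tendsto (tendsto_pow_nhdsGT_zero two_ne_zero)).add
    (h.phi_tendsto hk)
  simpa using this.const_sub 1

lemma eventually_mul_div_sq_sub_eq (h : IsSaddlePath β E m k ρ ξ u φ b a) :
    ∀ᶠ r in 𝓝[>] 0,
      a r * φ r ^ 2 + (E * (b r - u r) + m * (b r * φ r)) = k * (φ r / r) ^ 2 - E * u r := by
  filter_upwards [h.equation, self_mem_nhdsWithin] with r hr hr₀
  have hr₀ : r ≠ 0 := (Set.mem_Ioi.1 hr₀).ne'
  rw [div_pow, ← mul_div_assoc, ← hr, mul_div_cancel_left₀ _ (pow_ne_zero 2 hr₀)]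
  ring

lemma mul_div_sq_sub_tendsto (h : IsSaddlePath β E m k ρ ξ u φ b a) (hk : k ≠ 0) :
    Tendsto (fun r => k * (φ r / r) ^ 2 - E * u r) (𝓝[>] 0) (𝓝 0) := by
  have hφ := h.phi_tendsto hk
  have hbu := h.b_sub_isBigO.trans_tendsto (tendsto_pow_nhdsGT_zero two_ne_zero)
  have hbφ := (h.b_isBigO_one.mul (isBigO_refl φ _)).trans_tendsto (by simpa using hφ)
  have := (h.a_tendsto.mul (hφ.pow 2)).add ((hbu.const_mul E).add (hbφ.const_mul m))
  simpa using this.congr' h.eventually_mul_div_sq_sub_eq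

lemma u_tendsto (h : IsSaddlePath β E m k ρ ξ u φ b a) (hβ : β * a₀ ^ 2 = 1) (hE : 0 < E)
    (hka : 0 < k * a₀) : Tendsto u (𝓝[>] 0) (𝓝 a₀) := by
  have hk : k ≠ 0 := left_ne_zero_of_mul hka.ne'
  have sq_lim : Tendsto (fun r => (k * u r) ^ 2) (𝓝[>] 0) (𝓝 ((k * a₀) ^ 2)) := by
    have := (h.mul_sq_tendsto hk).const_mul ((k * a₀) ^ 2)
    rw [mul_one] at this
    exact this.congr fun r => by linear_combination k ^ 2 * u r ^ 2 * hβ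
  have small := (h.mul_div_sq_sub_tendsto hk).const_mul k
  rw [mul_zero] at small
  have nonneg : ∀ᶠ r in 𝓝[>] 0, 0 ≤ k * u r := by
    filter_upwards [small.eventually_lt_const (by positivity : 0 < E * (k * a₀ / 2)),
      sq_lim.eventually_const_lt (u := (k * a₀ / 2) ^ 2) (by gcongr; linarith)] with r hr hsq
    have lower : -(k * a₀ / 2) < k * u r := by
      refine lt_of_mul_lt_mul_left ?_ hE.le
      linarith [sq_nonneg (k * (φ r / r))]
    by_contra! hneg
    nlinarith
  have := (tendsto_nhds_of_sq hka.le nonneg sq_lim).div_const k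
  simpa [hk] using this

lemma phi_div_tendsto {e₀ : ℝ} (h : IsSaddlePath β E m k ρ ξ u φ b a) (hk : k ≠ 0) (he₀ : 0 ≤ e₀)
    (he : k * e₀ ^ 2 = E * a₀) (hu : Tendsto u (𝓝[>] 0) (𝓝 a₀)) :
    Tendsto (fun r => φ r / r) (𝓝[>] 0) (𝓝 e₀) := by
  refine tendsto_nhds_of_sq he₀ ?_ ?_
  · filter_upwards [h.eventually_pos, self_mem_nhdsWithin] with r hφ (hr : 0 < r)
    positivity
  · have := ((h.mul_div_sq_sub_tendsto hk).add (hu.const_mul E)).div_const k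
    rw [zero_add, ← he, mul_div_cancel_left₀ _ hk] at this
    exact this.congr fun r => by field_simp; ring

lemma fst_saddleMap_isBigO (h : IsSaddlePath β E m k ρ ξ u φ b a) (hβ : β * a₀ ^ 2 = 1) :
    (fun r => (saddleMap β E m k ρ ξ a₀ (r, (u r - a₀) / r, φ r / r)).1)
      =O[𝓝[>] 0] fun r => r ^ 3 := by
  refine ((isBigO_refl (fun r : ℝ => r⁻¹) _).mul h.phi_isBigO).congr' ?_ ?_ <;>
    filter_upwards [self_mem_nhdsWithin] with r (hr : 0 < r)
  · simp only [saddleMap, mul_div_cancel₀ _ hr.ne', add_sub_cancel]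
    field_simp
    linear_combination hβ
  · field_simp

lemma snd_saddleMap_isBigO (h : IsSaddlePath β E m k ρ ξ u φ b a) (hk : k ≠ 0) :
    (fun r => (saddleMap β E m k ρ ξ a₀ (r, (u r - a₀) / r, φ r / r)).2)
      =O[𝓝[>] 0] fun r => r ^ 4 := by
  have haφ := (h.a_isBigO.mul (h.phi_sq_isBigO hk)).congr_right
    (g₂ := fun r => r ^ 4) fun r => by ring
  have hEφ := isBigO_one_comp_of_continuous (f := fun x => E + m * x) (by fun_prop)
    h.phi_isBigO_one
  refine (haφ.add ((hEφ.mul h.b_isBigO).congr_right fun r => one_mul _)).congr' ?_ .rfl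
  filter_upwards [h.eventually_mul_div_sq_sub_eq, self_mem_nhdsWithin] with r heq (hr : 0 < r)
  simp only [saddleMap, mul_div_cancel₀ _ hr.ne', add_sub_cancel]
  linear_combination heq

lemma sub_div_tendsto (h : IsSaddlePath β E m k ρ ξ u φ b a) {e₀ : ℝ} (hβ : β * a₀ ^ 2 = 1)
    (hu : Tendsto u (𝓝[>] 0) (𝓝 a₀)) (hφ : Tendsto (fun r => φ r / r) (𝓝[>] 0) (𝓝 e₀)) :
    Tendsto (fun r => (u r - a₀) / r) (𝓝[>] 0) (𝓝 (-e₀ / (2 * β * a₀))) := by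
  have hr : Tendsto (fun r : ℝ => r) (𝓝[>] 0) (𝓝 0) := nhdsWithin_le_nhds
  have ha := two_mul_mul_ne_zero_of_mul_sq hβ
  have hB := (hr.const_mul (2 * β)).mul
    (((contDiff_B1hat (ρ := ρ) (ξ := ξ) (n := 0)).continuous.tendsto a₀).comp hu)
  have hfst := (h.fst_saddleMap_isBigO hβ).trans_tendsto (tendsto_pow_nhdsGT_zero three_ne_zero)
  have hden : Tendsto (fun r => β * (u r + a₀)) (𝓝[>] 0) (𝓝 (2 * β * a₀)) := by
    convert (hu.add_const a₀).const_mul β using 2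
    ring
  have := ((hfst.sub hφ).sub hB).div hden ha
  rw [mul_zero, zero_mul, zero_sub, sub_zero] at this
  refine this.congr' ?_
  filter_upwards [self_mem_nhdsWithin, hden.eventually_ne ha] with r (hr : 0 < r) hden
  simp only [Pi.div_apply, saddleMap, mul_div_cancel₀ _ hr.ne', add_sub_cancel,
    Function.comp_apply]
  rw [div_eq_iff hden]
  ring

theorem sub_expansion_isBigO (h : IsSaddlePath β E m k ρ ξ u φ b a)
    (hc : IsSaddleExpansion β E m k ρ ξ a₀ a₁ a₂ a₃ e₀ e₁ e₂) :
    (fun r => u r - (a₀ + a₁ * r + a₂ * r ^ 2 + a₃ * r ^ 3)) =O[𝓝[>] 0] fun r => r ^ 4 := by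
  have hk : k ≠ 0 := left_ne_zero_of_mul hc.k_mul_pos.ne'
  have hu := h.u_tendsto hc.mul_sq hc.E_pos hc.k_mul_pos
  have hφ := h.phi_div_tendsto hk hc.e₀_pos.le hc.order_zero hu
  have hz : Tendsto (fun r => (u r - a₀) / r) (𝓝[>] 0) (𝓝 a₁) := by
    convert h.sub_div_tendsto hc.mul_sq hu hφ
    rw [eq_div_iff (two_mul_mul_ne_zero_of_mul_sq hc.mul_sq), hc.e₀_eq]
    ring
  have hr : Tendsto (fun r : ℝ => r) (𝓝[>] 0) (𝓝 0) := nhdsWithin_le_nhds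
  have hx' : Tendsto (fun r => (a₁ + a₂ * r + a₃ * r ^ 2, e₀ + e₁ * r + e₂ * r ^ 2)) (𝓝[>] 0)
      (𝓝 (a₁, e₀)) := by
    have : Continuous fun r : ℝ => (a₁ + a₂ * r + a₃ * r ^ 2, e₀ + e₁ * r + e₂ * r ^ 2) := by
      fun_prop
    simpa using (this.tendsto 0).mono_left nhdsWithin_le_nhds
  have residual : (fun r => saddleMap β E m k ρ ξ a₀ (r, (u r - a₀) / r, φ r / r))
      =O[𝓝[>] 0] fun r => r ^ 3 := (h.fst_saddleMap_isBigO hc.mul_sq).prod_left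
    ((h.snd_saddleMap_isBigO hk).trans (isBigO_pow_nhdsGT_zero (by norm_num)))
  have close := (isBigO_sub_of_injective_partial
    ((contDiff_saddleMap (n := 1)).contDiffAt.hasStrictFDerivAt one_ne_zero)
    hc.fderiv_saddleMap_injective hr (hz.prodMk_nhds hφ) hx').trans
      (residual.sub ((saddleMap_expansion_isBigO hc).mono nhdsWithin_le_nhds))
  refine ((isBigO_refl (fun r : ℝ => r) _).mul (isBigO_fst_prod.trans close)).congr' ?_
    (.of_forall fun r => by ring)
  filter_upwards [self_mem_nhdsWithin] with r (hr : 0 < r)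
  field_simp
  ring

end IsSaddlePath

end SaddlePath

/-! ### Expansion coefficients -/

lemma sgn'_sq (x : ℝ) : sgn' x ^ 2 = 1 := by
  unfold sgn'
  split <;> norm_num

lemma mul_sgn' (x : ℝ) : x * sgn' x = |x| := by
  unfold sgn'
  split_ifs with h
  · rw [abs_of_nonneg h, mul_one]
  · rw [abs_of_neg (not_le.1 h), mul_neg_one]

lemma betaT_pos {κ ξ t : ℝ} (hκ : κ ≠ 0) (hξ : ξ ≠ 0) (ht : 0 < t) : 0 < betaT κ ξ t := by
  have : 0 < (1 - Real.exp (-(κ * t))) / κ := by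
    rcases hκ.lt_or_gt with h | h
    · refine div_pos_of_neg_of_neg (sub_neg.2 (Real.one_lt_exp_iff.2 ?_)) h
      exact neg_pos.2 (mul_neg_of_neg_of_pos h ht)
    · exact div_pos (sub_pos.2 (Real.exp_lt_one_iff.2 (neg_neg_of_pos (mul_pos h ht)))) h
  have eq : betaT κ ξ t = ξ ^ 2 / 4 * ((1 - Real.exp (-(κ * t))) / κ) := by
    rw [betaT]
    field_simp
  rw [eq]
  positivity

lemma exists_isSaddleExpansion {β E μ k ρ ξ a₀ a₁ : ℝ} (hβ : β * a₀ ^ 2 = 1)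
    (hka : 0 < k * a₀) (ha : a₀ * a₁ < 0) (hE : 4 * k * a₁ ^ 2 = E * a₀ ^ 3) :
    ∃ e₀ e₁ e₂, IsSaddleExpansion β E (4 * μ * β) k ρ ξ a₀ a₁ (-μ / k - B1hat ρ ξ a₀ / a₀)
      (2 * β * a₁ ^ 3 * (β / E * (k * β * a₀ * B1hat ρ ξ a₀ - k * B1hat' ρ ξ a₀ - μ) +
        4 * μ ^ 2 * β ^ 2 / E ^ 2 - 1 / 16)) e₀ e₁ e₂ := by
  obtain ⟨hk, ha₀⟩ := mul_ne_zero_iff.1 hka.ne'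
  have ha₁ : a₁ ≠ 0 := right_ne_zero_of_mul ha.ne
  obtain rfl : β = 1 / a₀ ^ 2 := by rw [eq_div_iff (pow_ne_zero 2 ha₀), hβ]
  obtain rfl : E = 4 * k * a₁ ^ 2 / a₀ ^ 3 := by rw [eq_div_iff (pow_ne_zero 3 ha₀), hE]
  refine ⟨_, _, _, hβ, hka, ?_, rfl, rfl, rfl, ?_, ?_, ?_⟩
  · have : -2 * (1 / a₀ ^ 2) * a₀ * a₁ = -(a₀ * a₁) * (2 * (1 / a₀ ^ 2)) := by ring
    rw [this]
    exact mul_pos (neg_pos.2 ha) (by positivity)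
  · field_simp
    ring
  · field_simp
    ring
  · field_simp
    ring

section Coefficients

variable {κ θ ξ v ρ t k : ℝ}

lemma betaT_mul_coefA0_sq (hβ : 0 < betaT κ ξ t) :
    betaT κ ξ t * coefA0 κ θ ξ v ρ t k ^ 2 = 1 := by
  rw [coefA0, div_pow, sgn'_sq, Real.sq_sqrt hβ.le, mul_one_div_cancel hβ.ne']

lemma mul_coefA0 : k * coefA0 κ θ ξ v ρ t k = |k| / Real.sqrt (betaT κ ξ t) := by
  rw [coefA0, ← mul_div_assoc, mul_sgn']

lemma coefA1_eq : coefA1 κ θ ξ v ρ t k = -coefA0 κ θ ξ v ρ t k *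
    (Real.sqrt v * Real.exp (-(κ * t) / 2) /
      (2 * Real.sqrt |k| * betaT κ ξ t ^ ((1 : ℝ) / 4))) := by
  rw [coefA1]
  ring

lemma coefA0_mul_coefA1_neg (hβ : 0 < betaT κ ξ t) (hv : 0 < v) (hk : k ≠ 0) :
    coefA0 κ θ ξ v ρ t k * coefA1 κ θ ξ v ρ t k < 0 := by
  have ha₀ : 0 < coefA0 κ θ ξ v ρ t k ^ 2 :=
    pos_of_mul_pos_right (by rw [betaT_mul_coefA0_sq hβ]; exact one_pos) hβ.le
  rw [coefA1_eq, ← mul_assoc, mul_neg, ← sq, neg_mul]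
  exact neg_neg_of_pos (by positivity)

lemma mul_coefA1_sq (hβ : 0 < betaT κ ξ t) (hv : 0 ≤ v) (hk : k ≠ 0) :
    4 * k * coefA1 κ θ ξ v ρ t k ^ 2 =
      v * Real.exp (-(κ * t)) * coefA0 κ θ ξ v ρ t k ^ 3 := by
  have hexp : Real.exp (-(κ * t) / 2) ^ 2 = Real.exp (-(κ * t)) := by
    rw [← Real.exp_nat_mul]
    congr 1
    push_cast
    ring
  have hroot : (betaT κ ξ t ^ ((1 : ℝ) / 4)) ^ 2 = Real.sqrt (betaT κ ξ t) := by
    rw [Real.sqrt_eq_rpow, ← Real.rpow_natCast, ← Real.rpow_mul hβ.le]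
    norm_num
  have hka : k / (|k| * Real.sqrt (betaT κ ξ t)) = coefA0 κ θ ξ v ρ t k := by
    rw [div_mul_eq_div_div, coefA0, div_left_inj' (Real.sqrt_pos.2 hβ).ne',
      div_eq_iff (abs_ne_zero.2 hk), ← mul_sgn']
    linear_combination -k * sgn'_sq k
  rw [coefA1_eq, mul_pow, div_pow, mul_pow, mul_pow, mul_pow, hexp, hroot, Real.sq_sqrt hv,
    Real.sq_sqrt (abs_nonneg k)]
  linear_combination (v * Real.exp (-(κ * t)) * coefA0 κ θ ξ v ρ t k ^ 2) * hka

lemma coefA2_eq : coefA2 κ θ ξ v ρ t k =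
    -(κ * θ / ξ ^ 2) / k - B1hat ρ ξ (coefA0 κ θ ξ v ρ t k) / coefA0 κ θ ξ v ρ t k := by
  rw [coefA2]
  ring

lemma coefA3_eq (hβ : 0 < betaT κ ξ t) (hξ : ξ ≠ 0) (hv : v ≠ 0) :
    coefA3 κ θ ξ v ρ t k = 2 * betaT κ ξ t * coefA1 κ θ ξ v ρ t k ^ 3 *
      (betaT κ ξ t / (v * Real.exp (-(κ * t))) *
        (k * betaT κ ξ t * coefA0 κ θ ξ v ρ t k * B1hat ρ ξ (coefA0 κ θ ξ v ρ t k) -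
          k * B1hat' ρ ξ (coefA0 κ θ ξ v ρ t k) - κ * θ / ξ ^ 2) +
        4 * (κ * θ / ξ ^ 2) ^ 2 * betaT κ ξ t ^ 2 / (v * Real.exp (-(κ * t))) ^ 2 - 1 / 16) := by
  have hsqrt : |k| * Real.sqrt (betaT κ ξ t) = k * betaT κ ξ t * coefA0 κ θ ξ v ρ t k := by
    rw [mul_right_comm, mul_coefA0]
    nth_rw 3 [← Real.sq_sqrt hβ.le]
    have := (Real.sqrt_pos.2 hβ).ne'
    field_simp
  have hexp : Real.exp (-(κ * t)) = (Real.exp (κ * t))⁻¹ := Real.exp_neg _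
  rw [coefA3, mul_right_comm |k|, hsqrt, hexp]
  have := Real.exp_ne_zero (κ * t)
  field_simp
  ring

theorem exists_isSaddleExpansion_coef (hκ : κ ≠ 0) (hξ : ξ ≠ 0) (hv : 0 < v) (ht : 0 < t)
    (hk : k ≠ 0) :
    ∃ e₀ e₁ e₂, IsSaddleExpansion (betaT κ ξ t) (v * Real.exp (-(κ * t)))
      (4 * (κ * θ / ξ ^ 2) * betaT κ ξ t) k ρ ξ (coefA0 κ θ ξ v ρ t k) (coefA1 κ θ ξ v ρ t k)
      (coefA2 κ θ ξ v ρ t k) (coefA3 κ θ ξ v ρ t k) e₀ e₁ e₂ := by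
  have hβ := betaT_pos hκ hξ ht
  rw [coefA2_eq, coefA3_eq hβ hξ hv.ne']
  refine exists_isSaddleExpansion (betaT_mul_coefA0_sq hβ) ?_
    (coefA0_mul_coefA1_neg hβ hv hk) (mul_coefA1_sq hβ hv.le hk)
  rw [mul_coefA0]
  positivity

end Coefficients

namespace Heston

variable {κ θ ξ v ρ t k : ℝ} {u : ℝ → ℝ}

lemma exists_tendsto_nhdsSet_of_mem_hestDom (hκ : κ ≠ 0) (hθ : θ ≠ 0) (hξ : ξ ≠ 0) (ht : 0 < t)
    (hu : ∀ᶠ r in 𝓝[>] 0, u r ∈ hestDom κ θ ξ v ρ t (r ^ 4)) :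
    ∃ K : Set ℝ, IsCompact K ∧ (∀ᶠ r in 𝓝[>] 0, u r ∈ K) ∧
      Tendsto (fun r => (r ^ 2, u r)) (𝓝[>] 0) (𝓝ˢ ({0} ×ˢ K)) := by
  have hβ := betaT_pos hκ hξ ht
  obtain ⟨R, hR₀, hR⟩ : ∃ R, 0 ≤ R ∧ 1 < betaT κ ξ t * R ^ 2 := by
    refine ⟨2 / Real.sqrt (betaT κ ξ t), by positivity, ?_⟩
    rw [div_pow, Real.sq_sqrt hβ.le, mul_div_cancel₀ _ hβ.ne']
    norm_num
  have hmem : ∀ᶠ r in 𝓝[>] 0, u r ∈ Set.Icc (-R) R := by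
    filter_upwards [hu, (tendsto_pow_nhdsGT_nhdsGT two_ne_zero).eventually
      (eventually_hestDom_subset_Icc hκ hθ hξ hR₀ hR)] with r hr hsub
    exact hsub (by rwa [← pow_mul])
  exact ⟨_, isCompact_Icc, hmem,
    tendsto_prodMk_nhdsSet isCompact_Icc (tendsto_pow_nhdsGT_zero two_ne_zero) hmem⟩

theorem isSaddlePath (hκ : κ ≠ 0) (hθ : θ ≠ 0) (hξ : ξ ≠ 0) (ht : 0 < t) (hk : k ≠ 0)
    (hdom : ∀ᶠ r in 𝓝[>] 0, u r ∈ hestDom κ θ ξ v ρ t (r ^ 4))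
    (hsaddle : ∀ᶠ r in 𝓝[>] 0, deriv (hestLambda κ θ ξ v ρ t (r ^ 4)) (u r) = k) :
    IsSaddlePath (betaT κ ξ t) (v * Real.exp (-(κ * t))) (4 * (κ * θ / ξ ^ 2) * betaT κ ξ t) k ρ ξ
      u (fun r => logArg κ ρ ξ t (r ^ 2) (u r)) (fun r => deriv (realB κ ρ ξ (r ^ 2)) (u r))
      (fun r => deriv (realA κ θ ρ ξ (r ^ 2)) (u r)) := by
  obtain ⟨K, hK, hmem, htend⟩ := exists_tendsto_nhdsSet_of_mem_hestDom hκ hθ hξ ht hdom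
  have hreg := htend.eventually (eventually_regular (κ := κ) (ρ := ρ) (ξ := ξ))
  have hpos : ∀ᶠ r in 𝓝[>] 0, 0 < logArg κ ρ ξ t (r ^ 2) (u r) := by
    filter_upwards [hdom, hreg, self_mem_nhdsWithin,
      htend.eventually (eventually_logArg_sq_add_deriv_sq_pos (t := t))] with r hr hreg hr₀ hsq
    refine logArg_pos (betaT_pos hκ hξ ht).ne' hreg (eventually_logArg_nonneg (v := v) hκ hθ hξ
      (pow_pos hr₀ 2) hreg (hestDom_subset_interior ?_)) hsq
    rwa [← pow_mul]
  refine ⟨?_, hpos, ?_, ?_, (deriv_realA_isBigO hK).comp_tendsto htend, ?_⟩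
  · obtain ⟨C, hC⟩ := hK.isBounded.exists_norm_le
    exact .of_bound C (hmem.mono fun r hr => by simpa using hC _ hr)
  · have := ((realB_isBigO (κ := κ) (ρ := ρ) (ξ := ξ) hK).comp_tendsto htend).const_mul_left
      (-(2 * betaT κ ξ t))
    refine this.congr (fun r => ?_) fun r => ?_
    · simp only [Function.comp_apply, logArg]
      ring
    · simp only [Function.comp_apply]
      ring
  · refine ((deriv_realB_isBigO hK).comp_tendsto htend).congr_right fun r => ?_
    simp only [Function.comp_apply]
    ring
  · filter_upwards [hsaddle, hreg, hpos, self_mem_nhdsWithin] with r hr hreg hpos hr₀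
    have := saddle_equation hκ hξ (pow_pos hr₀ 2) hk hreg hpos (by rwa [← pow_mul])
    linear_combination this

end Heston

theorem stmt13_general {κ θ ξ v ρ t : ℝ} (hκ : κ ≠ 0) (hθ : θ ≠ 0) (hξ : ξ ≠ 0) (hv : 0 < v)
    (ht : 0 < t) {k : ℝ} (hk : k ≠ 0) {ustar : ℝ → ℝ}
    (hustar : ∀ᶠ τ in 𝓝[>] (0 : ℝ), ustar τ ∈ hestDom κ θ ξ v ρ t τ ∧
      deriv (hestLambda κ θ ξ v ρ t τ) (ustar τ) = (k : ℂ)) :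
    (fun τ : ℝ => ustar τ -
        (coefA0 κ θ ξ v ρ t k + coefA1 κ θ ξ v ρ t k * τ ^ ((1 : ℝ) / 4) +
          coefA2 κ θ ξ v ρ t k * τ ^ ((1 : ℝ) / 2) + coefA3 κ θ ξ v ρ t k * τ ^ ((3 : ℝ) / 4)))
      =O[𝓝[>] (0 : ℝ)] fun τ : ℝ => τ := by
  have hfour := (tendsto_pow_nhdsGT_nhdsGT four_ne_zero).eventually hustar
  obtain ⟨e₀, e₁, e₂, hcoef⟩ := exists_isSaddleExpansion_coef (θ := θ) (ρ := ρ) hκ hξ hv ht hk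
  have expansion := (Heston.isSaddlePath hκ hθ hξ ht hk (hfour.mono fun _ h => h.1)
    (hfour.mono fun _ h => h.2)).sub_expansion_isBigO hcoef
  refine (expansion.comp_tendsto (tendsto_rpow_nhdsGT_nhdsGT (p := 1 / 4) (by norm_num))).congr'
    ?_ ?_ <;> filter_upwards [self_mem_nhdsWithin] with τ (hτ : 0 < τ) <;>
    simp only [Function.comp_apply, ← Real.rpow_mul_natCast hτ.le] <;> norm_num

theorem stmt13 (κ θ ξ v ρ t : ℝ) (hκ : 0 < κ) (hθ : 0 < θ) (hξ : 0 < ξ)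
    (hv : 0 < v) (hρ : ρ ∈ Set.Ioo (-1 : ℝ) 1) (ht : 0 < t)
    (k : ℝ) (hk : k ≠ 0) (ustar : ℝ → ℝ)
    (hustar : ∀ᶠ τ in 𝓝[>] (0 : ℝ), ustar τ ∈ hestDom κ θ ξ v ρ t τ ∧
      deriv (hestLambda κ θ ξ v ρ t τ) (ustar τ) = (k : ℂ)) :
    (fun τ : ℝ => ustar τ -
        (coefA0 κ θ ξ v ρ t k + coefA1 κ θ ξ v ρ t k * τ ^ ((1 : ℝ) / 4) +
          coefA2 κ θ ξ v ρ t k * τ ^ ((1 : ℝ) / 2) + coefA3 κ θ ξ v ρ t k * τ ^ ((3 : ℝ) / 4)))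
      =O[𝓝[>] (0 : ℝ)] fun τ : ℝ => τ :=
  stmt13_general hκ.ne' hθ.ne' hξ.ne' hv ht hk hustar

end
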